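/- arXiv:1404.7764 — 2 statements merged into one kernel-verified Lean document; each statement's English description precedes it below -/
import Mathlib

section
/- For all integers a ≥ 2 and b with b > (a−1)!, there exist a constant c > 0 and an integer d₀ such that for all d ≥ d₀, every d-regular graph G has a spanning subgraph H containing no copy of the complete bipartite graph K_{a,b} and with minimum degree δ(H) ≥ c·d^{1−1/a}. -/
open SimpleGraph

def ContainsCopy {α β : Type*} (F : SimpleGraph α) (H : SimpleGraph β) : Prop :=
  ∃ f : F →g H, Function.Injective f

abbrev GraphFamily := Set (Σ n : ℕ, SimpleGraph (Fin n))

def FamFree {β : Type*} (H : SimpleGraph β) (𝓕 : GraphFamily) : Prop :=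
  ∀ F ∈ 𝓕, ¬ ContainsCopy F.2 H

noncomputable def extremalNum (n : ℕ) (𝓕 : GraphFamily) : ℕ :=
  sSup {k | ∃ H : SimpleGraph (Fin n), FamFree H 𝓕 ∧ k = H.edgeSet.ncard}

def LocallyInjective {α β : Type*} {F : SimpleGraph α} {G : SimpleGraph β}
    (φ : F →g G) : Prop :=
  ∀ v : α, Set.InjOn φ (F.neighborSet v)

def NoLocInjHom {α β : Type*} (F : SimpleGraph α) (G : SimpleGraph β) : Prop :=
  ¬ ∃ φ : F →g G, LocallyInjective φ

def ClosedFamily (𝓕 : GraphFamily) : Prop :=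
  ∀ (W : Type) [Fintype W] (G : SimpleGraph W),
    (∀ F ∈ 𝓕, NoLocInjHom F.2 G) ↔ FamFree G 𝓕

noncomputable def deg {β : Type*} (H : SimpleGraph β) (v : β) : ℕ :=
  (H.neighborSet v).ncard

noncomputable def minDeg {β : Type*} [Fintype β] (H : SimpleGraph β) : ℕ :=
  ⨅ v, deg H v

noncomputable def maxDeg {β : Type*} [Fintype β] (H : SimpleGraph β) : ℕ :=
  ⨆ v, deg H v

def RegularDeg {β : Type*} (G : SimpleGraph β) (d : ℕ) : Prop :=
  ∀ v, deg G v = d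

noncomputable def Bad {α γ : Type*} (G : SimpleGraph α) (χ : α → γ) (v : α) : ℕ :=
  {u | u ∈ G.neighborSet v ∧ ∃ v', v' ∈ G.neighborSet u ∧ v' ≠ v ∧ χ v' = χ v}.ncard

namespace KRS

theorem indep_count {V Y : Type*} [Fintype V] [DecidableEq V] [Fintype Y] [DecidableEq Y]
    (D : Finset V) (P Q : Finset (V → Y))
    (hP : ∀ f g : V → Y, (∀ x ∈ D, f x = g x) → f ∈ P → g ∈ P)
    (hQ : ∀ f g : V → Y, (∀ x, x ∉ D → f x = g x) → f ∈ Q → g ∈ Q) :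
    (P ∩ Q).card * Fintype.card (V → Y) ≤ P.card * Q.card := by
  classical
  rw [← Finset.card_univ, ← Finset.card_product, ← Finset.card_product]
  apply Finset.card_le_card_of_injOn
    (fun fg : (V → Y) × (V → Y) =>
      ((fun x => if x ∈ D then fg.1 x else fg.2 x), (fun x => if x ∈ D then fg.2 x else fg.1 x)))
  · rintro ⟨f, g⟩ h
    simp only [Finset.coe_product, Set.mem_prod, Finset.mem_coe, Finset.mem_inter,
      Finset.mem_univ, and_true] at h ⊢
    refine ⟨hP f _ ?_ h.1, hQ f _ ?_ h.2⟩
    · intro x hx; simp [hx]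
    · intro x hx; simp [hx]
  · rintro ⟨f, g⟩ - ⟨f', g'⟩ - h
    simp only [Prod.mk.injEq] at h ⊢
    obtain ⟨h1, h2⟩ := h
    constructor
    · funext x
      have e1 := congrFun h1 x
      have e2 := congrFun h2 x
      by_cases hx : x ∈ D
      · simpa [hx] using e1
      · simpa [hx] using e2
    · funext x
      have e1 := congrFun h1 x
      have e2 := congrFun h2 x
      by_cases hx : x ∈ D
      · simpa [hx] using e2
      · simpa [hx] using e1

theorem lll {V Y W : Type*} [Fintype V] [DecidableEq V] [Fintype Y] [DecidableEq Y] [Nonempty Y]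
    [Fintype W] [DecidableEq W]
    (E : W → Finset (V → Y)) (D : W → Finset V)
    (hdep : ∀ w (f g : V → Y), (∀ x ∈ D w, f x = g x) → f ∈ E w → g ∈ E w)
    (p : ℝ) (hp0 : 0 ≤ p) (hp4 : 4 * p ≤ 1)
    (hp : ∀ w, ((E w).card : ℝ) ≤ p * Fintype.card (V → Y)) (Δ : ℕ)
    (hΔ : ∀ w, (Finset.univ.filter fun w' => ¬ Disjoint (D w) (D w')).card ≤ Δ)
    (hpΔ : 4 * p * Δ ≤ 1) : ∃ f : V → Y, ∀ w, f ∉ E w := by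
  classical
  let gd : Finset W → Finset (V → Y) := fun S => Finset.univ.filter fun f => ∀ s ∈ S, f ∉ E s
  have hΩ : (0:ℝ) < Fintype.card (V → Y) := by exact_mod_cast Fintype.card_pos
  have key : ∀ n : ℕ, ∀ S : Finset W, S.card = n → ∀ w,
      ((E w ∩ gd S).card : ℝ) ≤ 2 * p * (gd S).card := by
    intro n
    induction n using Nat.strong_induction_on with
    | _ n ih =>
    intro S hS w
    set S1 := S.filter fun s => ¬ Disjoint (D w) (D s) with hS1
    set S2 := S.filter fun s => Disjoint (D w) (D s) with hS2
    have hind : ((E w ∩ gd S2).card : ℝ) ≤ p * (gd S2).card := by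
      have h1 := indep_count (D w) (E w) (gd S2) (hdep w) (by
        intro f g hfg hf
        simp only [gd, Finset.mem_filter, Finset.mem_univ, true_and] at hf ⊢
        intro s hs hgs
        refine hf s hs (hdep s g f ?_ hgs)
        intro x hx
        have hd := (Finset.mem_filter.1 hs).2
        exact (hfg x (fun hxw => Finset.disjoint_left.1 hd hxw hx)).symm)
      have h2 : ((E w ∩ gd S2).card : ℝ) * Fintype.card (V → Y) ≤ (E w).card * (gd S2).card := by
        exact_mod_cast h1
      have h3 : ((E w).card : ℝ) * (gd S2).card ≤ p * Fintype.card (V → Y) * (gd S2).card :=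
        mul_le_mul_of_nonneg_right (hp w) (by positivity)
      have h4 : ((E w ∩ gd S2).card : ℝ) * Fintype.card (V → Y) ≤
        (p * (gd S2).card) * Fintype.card (V → Y) := by linarith
      exact le_of_mul_le_mul_right h4 hΩ
    have hsub : gd S ⊆ gd S2 := by
      intro f hf
      simp only [gd, Finset.mem_filter, Finset.mem_univ, true_and] at hf ⊢
      exact fun s hs => hf s (Finset.mem_filter.1 hs).1
    have hmono : ((E w ∩ gd S).card : ℝ) ≤ (E w ∩ gd S2).card := by
      exact_mod_cast Finset.card_le_card (Finset.inter_subset_inter_left hsub)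
    have hhalf : ((gd S2).card : ℝ) ≤ 2 * (gd S).card := by
      by_cases hem : S1 = ∅
      · have : S2 = S := by
          rw [hS2, Finset.filter_eq_self]
          intro s hs
          by_contra hc
          have : s ∈ S1 := Finset.mem_filter.2 ⟨hs, hc⟩
          rw [hem] at this; simp at this
        rw [this]
        have : (0:ℝ) ≤ (gd S).card := by positivity
        linarith
      · have hlt : S2.card < n := by
          have h1 : S1.card + S2.card = S.card := by
            rw [add_comm]
            exact Finset.card_filter_add_card_filter_not (s := S) (fun s => Disjoint (D w) (D s))
          have h2 : 0 < S1.card := Finset.card_pos.2 (Finset.nonempty_iff_ne_empty.2 hem)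
          omega
        have hih := ih _ hlt S2 rfl
        have hcov : gd S2 ⊆ gd S ∪ S1.biUnion fun s => E s ∩ gd S2 := by
          intro f hf
          by_cases hfS : f ∈ gd S
          · exact Finset.mem_union_left _ hfS
          · apply Finset.mem_union_right
            simp only [gd, Finset.mem_filter, Finset.mem_univ, true_and, not_forall] at hfS
            obtain ⟨s, hs, hfs⟩ := hfS
            rw [not_not] at hfs
            refine Finset.mem_biUnion.2 ⟨s, ?_, Finset.mem_inter.2 ⟨hfs, hf⟩⟩
            refine Finset.mem_filter.2 ⟨hs, fun hd => ?_⟩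
            exact (Finset.mem_filter.1 hf).2 s (Finset.mem_filter.2 ⟨hs, hd⟩) hfs
        have hc1 : ((gd S2).card : ℝ) ≤ (gd S).card + ∑ s ∈ S1, ((E s ∩ gd S2).card : ℝ) := by
          have := (Finset.card_le_card hcov).trans ((Finset.card_union_le _ _).trans
            (Nat.add_le_add_left Finset.card_biUnion_le _))
          exact_mod_cast this
        have hc2 : ∑ s ∈ S1, ((E s ∩ gd S2).card : ℝ) ≤ S1.card * (2 * p * (gd S2).card) := by
          rw [← nsmul_eq_mul]
          exact Finset.sum_le_card_nsmul _ _ _ fun s _ => hih s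
        have hc3 : (S1.card : ℝ) ≤ Δ := by
          have : S1.card ≤ Δ := le_trans (Finset.card_le_card (by
            intro s hs
            exact Finset.mem_filter.2 ⟨Finset.mem_univ _, (Finset.mem_filter.1 hs).2⟩)) (hΔ w)
          exact_mod_cast this
        have hc4 : (S1.card : ℝ) * (2 * p * (gd S2).card) ≤ Δ * (2 * p * (gd S2).card) :=
          mul_le_mul_of_nonneg_right hc3 (by positivity)
        have hc5 : (4 * p * Δ) * (gd S2).card ≤ 1 * (gd S2).card :=
          mul_le_mul_of_nonneg_right hpΔ (by positivity)
        nlinarith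
    nlinarith
  have pos : ∀ S : Finset W, 0 < (gd S).card := by
    intro S
    induction S using Finset.induction_on with
    | empty => simp [gd, Fintype.card_pos]
    | insert w S hw ih =>
      have h1 := key _ S rfl w
      have h2 : (gd S).card ≤ (gd (insert w S)).card + (E w ∩ gd S).card := by
        refine le_trans (Finset.card_le_card ?_) (Finset.card_union_le _ _)
        intro f hf
        by_cases hfw : f ∈ E w
        · exact Finset.mem_union_right _ (Finset.mem_inter.2 ⟨hfw, hf⟩)
        · apply Finset.mem_union_left
          simp only [gd, Finset.mem_filter, Finset.mem_univ, true_and, Finset.forall_mem_insert] at hf ⊢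
          exact ⟨hfw, hf⟩
      have h3 : ((gd S).card : ℝ) ≤ (gd (insert w S)).card + (E w ∩ gd S).card := by exact_mod_cast h2
      have h4 : (0:ℝ) < (gd S).card := by exact_mod_cast ih
      have : (0:ℝ) < (gd (insert w S)).card := by nlinarith
      exact_mod_cast this
  obtain ⟨f, hf⟩ := Finset.card_pos.1 (pos Finset.univ)
  exact ⟨f, fun w => (Finset.mem_filter.1 hf).2 w (Finset.mem_univ _)⟩
end KRS

namespace KRS

theorem count_inj {V Y J : Type*} [Fintype V] [DecidableEq V] [Fintype Y] [DecidableEq Y]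
    [Fintype J] [DecidableEq J] (g : J → V) (hg : Function.Injective g) (c : J → Y) :
    (Finset.univ.filter fun f : V → Y => ∀ j, f (g j) = c j).card * Fintype.card Y ^ Fintype.card J
      ≤ Fintype.card (V → Y) := by
  classical
  rw [← Fintype.card_fun, ← Finset.card_univ (α := J → Y), ← Finset.card_product, ← Finset.card_univ]
  apply Finset.card_le_card_of_injOn (fun fe => Function.extend g fe.2 fe.1)
  · intro _ _; simp
  · rintro ⟨f, e⟩ h ⟨f', e'⟩ h' heq
    simp only [Finset.coe_product, Set.mem_prod, Finset.mem_coe, Finset.mem_filter,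
      Finset.mem_univ, true_and, and_true] at h h'
    simp only at heq
    have he : e = e' := by
      funext j
      have := congrFun heq (g j)
      simpa [hg.extend_apply] using this
    have hf : f = f' := by
      funext x
      by_cases hx : ∃ j, g j = x
      · obtain ⟨j, rfl⟩ := hx
        rw [h j, h' j]
      · have := congrFun heq x
        simpa [Function.extend_apply' _ _ _ hx] using this
    rw [he, hf]

theorem count_into {V Y : Type*} [Fintype V] [DecidableEq V] [Fintype Y] [DecidableEq Y]
    (Γ : Finset V) (Z : Finset Y) :
    (Finset.univ.filter fun f : V → Y => ∀ x ∈ Γ, f x ∈ Z).card * Fintype.card Y ^ Γ.card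
      = Z.card ^ Γ.card * Fintype.card (V → Y) := by
  classical
  have h1 : (Finset.univ.filter fun f : V → Y => ∀ x ∈ Γ, f x ∈ Z)
      = Fintype.piFinset (fun x => if x ∈ Γ then Z else Finset.univ) := by
    ext f
    simp only [Finset.mem_filter, Finset.mem_univ, true_and, Fintype.mem_piFinset]
    refine forall_congr' fun x => ?_
    by_cases hx : x ∈ Γ <;> simp [hx]
  rw [h1, Fintype.card_piFinset]
  have h2 : ∀ x, (if x ∈ Γ then Z else (Finset.univ : Finset Y)).card
      = if x ∈ Γ then Z.card else Fintype.card Y := by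
    intro x; split_ifs <;> simp
  simp_rw [h2]
  rw [Finset.prod_ite]
  simp only [Finset.prod_const, Finset.filter_mem_eq_inter, Finset.univ_inter, Fintype.card_fun]
  have h3 : (Finset.univ.filter fun x => x ∉ Γ).card + Γ.card = Fintype.card V := by
    rw [← Finset.card_univ, ← Finset.card_filter_add_card_filter_not (s := Finset.univ) (fun x => x ∈ Γ)]
    simp [add_comm]
  rw [mul_assoc, ← pow_add, h3]

/-- few colours of S seen -/
theorem few_colours {V Y : Type*} [Fintype V] [DecidableEq V] [Fintype Y] [DecidableEq Y] [Nonempty Y]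
    (Γ : Finset V) (S : Finset Y) (r : ℕ) (hr : r ≤ S.card) :
    ((Finset.univ.filter fun f : V → Y => (Γ.image f ∩ S).card ≤ r).card : ℝ)
      ≤ (S.card.choose r : ℝ) *
        (((Fintype.card Y - S.card + r : ℕ) : ℝ) / Fintype.card Y) ^ Γ.card * Fintype.card (V → Y) := by
  classical
  have hY : (0:ℝ) < Fintype.card Y := by exact_mod_cast Fintype.card_pos
  have hsub : (Finset.univ.filter fun f : V → Y => (Γ.image f ∩ S).card ≤ r) ⊆
      (S.powersetCard r).biUnion fun T =>
        Finset.univ.filter fun f : V → Y => ∀ x ∈ Γ, f x ∈ Sᶜ ∪ T := by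
    intro f hf
    simp only [Finset.mem_filter, Finset.mem_univ, true_and] at hf
    obtain ⟨T, hT1, hT2, hT3⟩ := Finset.exists_subsuperset_card_eq
      (Finset.inter_subset_right : Γ.image f ∩ S ⊆ S) hf hr
    refine Finset.mem_biUnion.2 ⟨T, Finset.mem_powersetCard.2 ⟨hT2, hT3⟩, ?_⟩
    simp only [Finset.mem_filter, Finset.mem_univ, true_and, Finset.mem_union, Finset.mem_compl]
    intro x hx
    by_cases hS : f x ∈ S
    · right
      exact hT1 (Finset.mem_inter.2 ⟨Finset.mem_image_of_mem _ hx, hS⟩)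
    · exact Or.inl hS
  have h1 := (Finset.card_le_card hsub).trans Finset.card_biUnion_le
  have h2 : ∀ T ∈ S.powersetCard r,
      ((Finset.univ.filter fun f : V → Y => ∀ x ∈ Γ, f x ∈ Sᶜ ∪ T).card : ℝ) ≤
        (((Fintype.card Y - S.card + r : ℕ) : ℝ) / Fintype.card Y) ^ Γ.card * Fintype.card (V → Y) := by
    intro T hT
    have hc : (Sᶜ ∪ T).card ≤ Fintype.card Y - S.card + r := by
      refine (Finset.card_union_le _ _).trans ?_
      rw [Finset.card_compl, (Finset.mem_powersetCard.1 hT).2]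
    have e := count_into Γ (Sᶜ ∪ T)
    have e' : ((Finset.univ.filter fun f : V → Y => ∀ x ∈ Γ, f x ∈ Sᶜ ∪ T).card : ℝ) *
      (Fintype.card Y : ℝ) ^ Γ.card = ((Sᶜ ∪ T).card : ℝ) ^ Γ.card * Fintype.card (V → Y) := by
      exact_mod_cast e
    rw [div_pow, div_mul_eq_mul_div, le_div_iff₀ (by positivity), e']
    gcongr
  calc _ ≤ ∑ T ∈ S.powersetCard r,
        ((Finset.univ.filter fun f : V → Y => ∀ x ∈ Γ, f x ∈ Sᶜ ∪ T).card : ℝ) := by exact_mod_cast h1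
    _ ≤ _ := Finset.sum_le_card_nsmul _ _ _ h2
    _ = _ := by rw [Finset.card_powersetCard, nsmul_eq_mul]; ring

theorem pair_count {V Y : Type*} [Fintype V] [DecidableEq V] [Fintype Y] [DecidableEq Y]
    (I : Finset V) (c : I → Y) (hc : Function.Injective c) (ξ : I → V) (hξ : ∀ u : I, ξ u ≠ u) :
    (Finset.univ.filter fun f : V → Y => (∀ u : I, f u = c u) ∧ ∀ u : I, f (ξ u) = c u).card
      * Fintype.card Y ^ (2 * I.card) ≤ Fintype.card (V → Y) := by
  classical
  by_cases hne : ∃ f : V → Y, (∀ u : I, f u = c u) ∧ ∀ u : I, f (ξ u) = c u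
  · obtain ⟨f, hf1, hf2⟩ := hne
    have hinj : Function.Injective (Sum.elim (fun u : I => (u : V)) ξ) := by
      rintro (u | u) (v | v) h
      · simp only [Sum.elim_inl] at h
        rw [Subtype.ext h]
      · simp only [Sum.elim_inl, Sum.elim_inr] at h
        have : c u = c v := by rw [← hf1 u, h, hf2 v]
        have := hc this
        subst this
        exact absurd h.symm (hξ u)
      · simp only [Sum.elim_inl, Sum.elim_inr] at h
        have : c v = c u := by rw [← hf1 v, ← h, hf2 u]
        have := hc this
        subst this
        exact absurd h (hξ v)
      · simp only [Sum.elim_inr] at h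
        have : c u = c v := by rw [← hf2 u, h, hf2 v]
        rw [hc this]
    have := count_inj _ hinj (Sum.elim c c)
    simp only [Fintype.card_sum, Fintype.card_coe, Sum.forall, Sum.elim_inl, Sum.elim_inr] at this
    rw [two_mul]
    exact this
  · have : (Finset.univ.filter fun f : V → Y => (∀ u : I, f u = c u) ∧ ∀ u : I, f (ξ u) = c u) = ∅ := by
      rw [Finset.filter_eq_empty_iff]
      intro f _ h
      exact hne ⟨f, h⟩
    rw [this]; simp

open Classical in
theorem defect_fixed {V Y : Type*} [Fintype V] [DecidableEq V] [Fintype Y] [DecidableEq Y] [Nonempty Y]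
    (I : Finset V) (S : Finset Y) (ω : V → Y → V → ℝ) (h0 : ∀ u c x, 0 ≤ ω u c x) (κ : ℝ)
    (hκ : ∀ u ∈ I, ∀ c, ∑ x, ω u c x ≤ κ) :
    ((Finset.univ.filter fun f : V → Y => Set.InjOn f I ∧ (∀ u ∈ I, f u ∈ S) ∧
      ∀ u ∈ I, 1 ≤ ∑ x ∈ Finset.univ.erase u, ω u (f u) x * (if f x = f u then 1 else 0)).card : ℝ)
      ≤ ((S.card * κ) / (Fintype.card Y : ℝ) ^ 2) ^ I.card * Fintype.card (V → Y) := by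
  classical
  have hY : (0:ℝ) < Fintype.card Y := by exact_mod_cast Fintype.card_pos
  set CS : Finset (I → Y) := (Fintype.piFinset fun _ : I => S).filter Function.Injective with hCS
  set XS : Finset (I → V) := Fintype.piFinset fun u : I => Finset.univ.erase (u : V) with hXS
  set Ω : ℝ := ((Fintype.card (V → Y) : ℕ) : ℝ) with hΩ
  let F : (V → Y) → (I → Y) → ℝ := fun f c => ∑ ξ ∈ XS, (∏ u : I, ω u (c u) (ξ u)) *
          (if (∀ u : I, f u = c u) ∧ ∀ u : I, f (ξ u) = c u then 1 else 0)
  have step : ∀ f : V → Y,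
      (if Set.InjOn f I ∧ (∀ u ∈ I, f u ∈ S) ∧
      ∀ u ∈ I, 1 ≤ ∑ x ∈ Finset.univ.erase u, ω u (f u) x * (if f x = f u then 1 else 0)
        then (1:ℝ) else 0)
      ≤ ∑ c ∈ CS, F f c := by
    intro f
    split_ifs with hf
    · obtain ⟨hinj, hS, h1⟩ := hf
      set c : I → Y := fun u => f u with hc
      have hcmem : c ∈ CS := by
        simp only [hCS, Finset.mem_filter, Fintype.mem_piFinset]
        refine ⟨fun u => hS u u.2, fun u v huv => Subtype.ext (hinj u.2 v.2 huv)⟩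
      have hone : (1:ℝ) ≤ ∏ u : I, ∑ x ∈ Finset.univ.erase (u:V), ω u (c u) x * (if f x = c u then 1 else 0) := by
        calc (1:ℝ) = ∏ u : I, 1 := by simp
          _ ≤ _ := Finset.prod_le_prod (fun _ _ => zero_le_one) (fun u _ => h1 u u.2)
      rw [Finset.prod_univ_sum] at hone
      have hF : ∀ c' ∈ CS, 0 ≤ F f c' := by
        intro c' _
        refine Finset.sum_nonneg fun ξ _ => mul_nonneg (Finset.prod_nonneg fun u _ => h0 _ _ _) ?_
        split_ifs <;> norm_num
      have hle : F f c ≤ ∑ c' ∈ CS, F f c' := Finset.single_le_sum hF hcmem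
      refine (hone.trans (le_of_eq ?_)).trans hle
      refine Finset.sum_congr rfl fun ξ _ => ?_
      rw [Finset.prod_mul_distrib]
      congr 1
      have hcc : ∀ u : I, f u = c u := fun u => rfl
      rw [Finset.prod_ite_zero]
      by_cases hq : ∀ u : I, f (ξ u) = c u
      · rw [if_pos (fun u _ => hq u), if_pos ⟨hcc, hq⟩]; simp
      · rw [if_neg (fun hh => hq fun u => hh u (Finset.mem_univ _)), if_neg (fun hh => hq hh.2)]
    · refine Finset.sum_nonneg fun c _ => Finset.sum_nonneg fun ξ _ =>
        mul_nonneg (Finset.prod_nonneg fun u _ => h0 _ _ _) ?_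
      split_ifs <;> norm_num
  have hcard : ∀ c ∈ CS, ∀ ξ ∈ XS,
      (∑ f : V → Y, if (∀ u : I, f u = c u) ∧ ∀ u : I, f (ξ u) = c u then (1:ℝ) else 0)
        ≤ Ω / (Fintype.card Y : ℝ) ^ (2 * I.card) := by
    intro c hc ξ hξ
    rw [Finset.sum_boole, le_div_iff₀ (by positivity)]
    have := pair_count I c (Finset.mem_filter.1 hc).2 ξ (fun u => by
      have := (Fintype.mem_piFinset.1 hξ) u
      exact (Finset.mem_erase.1 this).1)
    rw [hΩ]; exact_mod_cast this
  have hωsum : ∀ c ∈ CS, ∑ ξ ∈ XS, ∏ u : I, ω u (c u) (ξ u) ≤ κ ^ I.card := by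
    intro c _
    rw [hXS, ← Finset.prod_univ_sum]
    calc _ ≤ ∏ u : I, κ := by
          refine Finset.prod_le_prod (fun u _ => Finset.sum_nonneg fun x _ => h0 _ _ _) fun u _ => ?_
          exact le_trans (Finset.sum_le_sum_of_subset_of_nonneg (Finset.erase_subset _ _)
            fun x _ _ => h0 _ _ _) (hκ u u.2 _)
      _ = κ ^ I.card := by simp
  have hCScard : (CS.card : ℝ) ≤ (S.card : ℝ) ^ I.card := by
    have : CS.card ≤ S.card ^ I.card := by
      refine (Finset.card_filter_le _ _).trans ?_
      simp [Fintype.card_piFinset]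
    exact_mod_cast this
  by_cases hIe : I = ∅
  · subst hIe
    simp only [Finset.coe_empty, Set.injOn_empty, Finset.notMem_empty, IsEmpty.forall_iff, implies_true, and_true, Finset.card_empty, pow_zero, one_mul]
    simp [hΩ]
  have hκ0 : 0 ≤ κ := by
    obtain ⟨u, hu⟩ := Finset.nonempty_iff_ne_empty.2 hIe
    exact (Finset.sum_nonneg fun x _ => h0 u (Classical.arbitrary Y) x).trans (hκ u hu _)
  calc _ = ∑ f : V → Y, (if Set.InjOn f I ∧ (∀ u ∈ I, f u ∈ S) ∧
      ∀ u ∈ I, 1 ≤ ∑ x ∈ Finset.univ.erase u, ω u (f u) x * (if f x = f u then 1 else 0)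
        then (1:ℝ) else 0) := by rw [Finset.sum_boole]
    _ ≤ ∑ f : V → Y, ∑ c ∈ CS, ∑ ξ ∈ XS, (∏ u : I, ω u (c u) (ξ u)) *
          (if (∀ u : I, f u = c u) ∧ ∀ u : I, f (ξ u) = c u then 1 else 0) :=
        Finset.sum_le_sum fun f _ => step f
    _ = ∑ c ∈ CS, ∑ ξ ∈ XS, (∏ u : I, ω u (c u) (ξ u)) *
          ∑ f : V → Y, (if (∀ u : I, f u = c u) ∧ ∀ u : I, f (ξ u) = c u then (1:ℝ) else 0) := by
        rw [Finset.sum_comm]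
        refine Finset.sum_congr rfl fun c _ => ?_
        rw [Finset.sum_comm]
        refine Finset.sum_congr rfl fun ξ _ => ?_
        rw [Finset.mul_sum]
    _ ≤ ∑ c ∈ CS, ∑ ξ ∈ XS, (∏ u : I, ω u (c u) (ξ u)) * (Ω / (Fintype.card Y : ℝ) ^ (2 * I.card)) := by
        refine Finset.sum_le_sum fun c hc => Finset.sum_le_sum fun ξ hξ => ?_
        exact mul_le_mul_of_nonneg_left (hcard c hc ξ hξ) (Finset.prod_nonneg fun u _ => h0 _ _ _)
    _ ≤ ∑ c ∈ CS, κ ^ I.card * (Ω / (Fintype.card Y : ℝ) ^ (2 * I.card)) := by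
        refine Finset.sum_le_sum fun c hc => ?_
        rw [← Finset.sum_mul]
        exact mul_le_mul_of_nonneg_right (hωsum c hc) (by positivity)
    _ = CS.card * (κ ^ I.card * (Ω / (Fintype.card Y : ℝ) ^ (2 * I.card))) := by
        rw [Finset.sum_const, nsmul_eq_mul]
    _ ≤ (S.card : ℝ) ^ I.card * (κ ^ I.card * (Ω / (Fintype.card Y : ℝ) ^ (2 * I.card))) := by
        gcongr
    _ = _ := by
        rw [div_pow, mul_pow, ← pow_mul]
        ring

open Classical in
theorem defect_count {V Y : Type*} [Fintype V] [DecidableEq V] [Fintype Y] [DecidableEq Y] [Nonempty Y]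
    (Γ : Finset V) (h : ℕ) (S : Finset Y) (ω : V → Y → V → ℝ) (h0 : ∀ u c x, 0 ≤ ω u c x) (κ : ℝ)
    (hκ : ∀ u ∈ Γ, ∀ c, ∑ x, ω u c x ≤ κ) :
    ((Finset.univ.filter fun f : V → Y => ∃ I ⊆ Γ, I.card = h ∧ Set.InjOn f I ∧ (∀ u ∈ I, f u ∈ S) ∧
      ∀ u ∈ I, 1 ≤ ∑ x ∈ Finset.univ.erase u, ω u (f u) x * (if f x = f u then 1 else 0)).card : ℝ)
      ≤ Γ.card.choose h * ((S.card * κ) / (Fintype.card Y : ℝ) ^ 2) ^ h * Fintype.card (V → Y) := by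
  classical
  have hsub : (Finset.univ.filter fun f : V → Y => ∃ I ⊆ Γ, I.card = h ∧ Set.InjOn f I ∧ (∀ u ∈ I, f u ∈ S) ∧
      ∀ u ∈ I, 1 ≤ ∑ x ∈ Finset.univ.erase u, ω u (f u) x * (if f x = f u then 1 else 0)) ⊆
      (Γ.powersetCard h).biUnion fun I => Finset.univ.filter fun f : V → Y =>
        Set.InjOn f I ∧ (∀ u ∈ I, f u ∈ S) ∧
      ∀ u ∈ I, 1 ≤ ∑ x ∈ Finset.univ.erase u, ω u (f u) x * (if f x = f u then 1 else 0) := by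
    intro f hf
    obtain ⟨I, h1, h2, h3⟩ := (Finset.mem_filter.1 hf).2
    exact Finset.mem_biUnion.2 ⟨I, Finset.mem_powersetCard.2 ⟨h1, h2⟩,
      Finset.mem_filter.2 ⟨Finset.mem_univ _, h3⟩⟩
  have h1 := (Finset.card_le_card hsub).trans Finset.card_biUnion_le
  have h2 : ∀ I ∈ Γ.powersetCard h, ((Finset.univ.filter fun f : V → Y =>
        Set.InjOn f I ∧ (∀ u ∈ I, f u ∈ S) ∧
      ∀ u ∈ I, 1 ≤ ∑ x ∈ Finset.univ.erase u, ω u (f u) x * (if f x = f u then 1 else 0)).card : ℝ)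
      ≤ ((S.card * κ) / (Fintype.card Y : ℝ) ^ 2) ^ h * Fintype.card (V → Y) := by
    intro I hI
    obtain ⟨hI1, hI2⟩ := Finset.mem_powersetCard.1 hI
    have := defect_fixed I S ω h0 κ (fun u hu => hκ u (hI1 hu))
    rw [hI2] at this
    exact this
  calc _ ≤ ∑ I ∈ Γ.powersetCard h, ((Finset.univ.filter fun f : V → Y =>
        Set.InjOn f I ∧ (∀ u ∈ I, f u ∈ S) ∧
      ∀ u ∈ I, 1 ≤ ∑ x ∈ Finset.univ.erase u, ω u (f u) x * (if f x = f u then 1 else 0)).card : ℝ) := by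
        exact_mod_cast h1
    _ ≤ _ := Finset.sum_le_card_nsmul _ _ _ h2
    _ = _ := by rw [Finset.card_powersetCard, nsmul_eq_mul]; ring
end KRS

namespace KRS

def coll {V Y : Type*} [DecidableEq V] (N : V → Finset V) (U : Finset V) (f : V → Y) (b u : V) : Prop :=
  ∃ x ∈ N b ∩ U, x ≠ u ∧ f x = f u

open Classical in
def bad {V Y : Type*} [DecidableEq V] (N : V → Finset V) (U : Finset V) (Tg : V → Y → Finset V)
    (f : V → Y) (u : V) : Prop :=
  (Tg u (f u)).card < 2 * ((Tg u (f u)).filter fun b => coll N U f b u).card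

section
set_option linter.unusedSectionVars false
set_option linter.unusedVariables false
variable {V Y : Type*} [Fintype V] [DecidableEq V] [Fintype Y] [DecidableEq Y]

theorem coll_congr (N : V → Finset V) (U : Finset V) (f g : V → Y) (b u : V)
    (hu : f u = g u) (h : ∀ x ∈ N b, f x = g x) : coll N U f b u ↔ coll N U g b u := by
  unfold coll
  refine exists_congr fun x => and_congr_right fun hx => ?_
  rw [h x (Finset.mem_inter.1 hx).1, hu]

theorem bad_congr (N : V → Finset V) (U : Finset V) (Tg : V → Y → Finset V) (f g : V → Y) (u : V)
    (hT : ∀ c, Tg u c ⊆ N u)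
    (hu : f u = g u) (h : ∀ b ∈ N u, ∀ x ∈ N b, f x = g x) : bad N U Tg f u ↔ bad N U Tg g u := by
  classical
  unfold bad
  rw [hu]
  have : (Tg u (g u)).filter (fun b => coll N U f b u) = (Tg u (g u)).filter (fun b => coll N U g b u) := by
    refine Finset.filter_congr fun b hb => ?_
    exact coll_congr N U f g b u hu (h b (hT _ hb))
  rw [this]

def nb3 (N : V → Finset V) (w : V) : Finset V := ((N w).biUnion N).biUnion N

theorem mem_nb3 (N : V → Finset V) (w x : V) :
    x ∈ nb3 N w ↔ ∃ y ∈ N w, ∃ z ∈ N y, x ∈ N z := by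
  simp only [nb3, Finset.mem_biUnion]
  constructor
  · rintro ⟨z, ⟨y, hy, hz⟩, hx⟩; exact ⟨y, hy, z, hz, hx⟩
  · rintro ⟨y, hy, z, hz, hx⟩; exact ⟨z, ⟨y, hy, hz⟩, hx⟩

theorem nb3_card (N : V → Finset V) (d : ℕ) (hd : ∀ w, (N w).card ≤ d) (w : V) :
    (nb3 N w).card ≤ d ^ 3 := by
  unfold nb3
  have h1 : ((N w).biUnion N).card ≤ d * d :=
    Finset.card_biUnion_le_card_mul _ _ _ (fun x _ => hd x) |>.trans (Nat.mul_le_mul_right _ (hd w))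
  refine (Finset.card_biUnion_le_card_mul _ _ _ (fun x _ => hd x)).trans ?_
  calc _ ≤ (d * d) * d := Nat.mul_le_mul_right _ h1
    _ = d ^ 3 := by ring

theorem nb3_dep (N : V → Finset V) (hN : ∀ x y, x ∈ N y → y ∈ N x) (d : ℕ) (hd : ∀ w, (N w).card ≤ d) (w : V) :
    (Finset.univ.filter fun w' => ¬ Disjoint (nb3 N w) (nb3 N w')).card ≤ d ^ 6 := by
  have : (Finset.univ.filter fun w' => ¬ Disjoint (nb3 N w) (nb3 N w')) ⊆ (nb3 N w).biUnion (nb3 N) := by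
    intro w' hw'
    have := (Finset.mem_filter.1 hw').2
    rw [Finset.not_disjoint_iff] at this
    obtain ⟨x, hx, hx'⟩ := this
    refine Finset.mem_biUnion.2 ⟨x, hx, ?_⟩
    rw [mem_nb3] at hx' ⊢
    obtain ⟨y, hy, z, hz, hxz⟩ := hx'
    exact ⟨z, hN _ _ hxz, y, hN _ _ hz, hN _ _ hy⟩
  refine (Finset.card_le_card this).trans ((Finset.card_biUnion_le_card_mul _ _ _
    (fun x _ => nb3_card N d hd x)).trans ?_)
  calc _ ≤ d ^ 3 * d ^ 3 := Nat.mul_le_mul_right _ (nb3_card N d hd w)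
    _ = d ^ 6 := by ring

open Classical in
theorem round_event [Nonempty Y] (N : V → Finset V) (hN : ∀ x y, x ∈ N y → y ∈ N x)
    (U : Finset V) (n : ℕ) (hn : ∀ b, (N b ∩ U).card ≤ n) (Tg : V → Y → Finset V)
    (w : V) (Γ : Finset V) (S : Finset Y) (h : ℕ) :
    ((Finset.univ.filter fun f : V → Y => ∃ I ⊆ Γ, I.card = h ∧ Set.InjOn f I ∧ (∀ u ∈ I, f u ∈ S) ∧
      ∀ u ∈ I, (bad N U Tg f u ∨ coll N U f w u)).card : ℝ)
    ≤ Γ.card.choose h * ((S.card * (3 * n)) / (Fintype.card Y : ℝ) ^ 2) ^ h * Fintype.card (V → Y) := by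
  let ω : V → Y → V → ℝ := fun u c x =>
    2 / ((Tg u c).card : ℝ) * (∑ b ∈ Tg u c, if x ∈ N b ∩ U then 1 else 0) + if x ∈ N w ∩ U then 1 else 0
  have hω0 : ∀ u c x, 0 ≤ ω u c x := by
    intro u c x
    have : (0:ℝ) ≤ ∑ b ∈ Tg u c, if x ∈ N b ∩ U then (1:ℝ) else 0 :=
      Finset.sum_nonneg fun b _ => by split_ifs <;> norm_num
    have h2 : (0:ℝ) ≤ if x ∈ N w ∩ U then (1:ℝ) else 0 := by split_ifs <;> norm_num
    have : 0 ≤ 2 / ((Tg u c).card : ℝ) * (∑ b ∈ Tg u c, if x ∈ N b ∩ U then 1 else 0) := by positivity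
    exact add_nonneg this h2
  have hsumN : ∀ b, ∑ x, (if x ∈ N b ∩ U then (1:ℝ) else 0) ≤ n := by
    intro b
    rw [Finset.sum_boole]
    have := hn b
    simp only [Finset.filter_mem_eq_inter, Finset.univ_inter]
    exact_mod_cast this
  have hωκ : ∀ u ∈ Γ, ∀ c, ∑ x, ω u c x ≤ 3 * n := by
    intro u _ c
    simp only [ω]
    rw [Finset.sum_add_distrib, ← Finset.mul_sum, Finset.sum_comm]
    have h1 : ∑ b ∈ Tg u c, ∑ x, (if x ∈ N b ∩ U then (1:ℝ) else 0) ≤ (Tg u c).card * n := by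
      rw [← nsmul_eq_mul]
      exact Finset.sum_le_card_nsmul _ _ _ fun b _ => hsumN b
    have h2 := hsumN w
    have h3 : 2 / ((Tg u c).card : ℝ) * ∑ b ∈ Tg u c, ∑ x, (if x ∈ N b ∩ U then (1:ℝ) else 0) ≤ 2 * n := by
      rcases Nat.eq_zero_or_pos (Tg u c).card with h0 | h0
      · rw [h0]; simp
      · have h0' : (0:ℝ) < (Tg u c).card := by exact_mod_cast h0
        calc _ ≤ 2 / ((Tg u c).card : ℝ) * ((Tg u c).card * n) := by gcongr
          _ = 2 * n := by field_simp
    linarith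
  have hdc := defect_count Γ h S ω hω0 (3 * n) hωκ
  refine le_trans ?_ hdc
  have : (Finset.univ.filter fun f : V → Y => ∃ I ⊆ Γ, I.card = h ∧ Set.InjOn f I ∧ (∀ u ∈ I, f u ∈ S) ∧
      ∀ u ∈ I, (bad N U Tg f u ∨ coll N U f w u)) ⊆
    (Finset.univ.filter fun f : V → Y => ∃ I ⊆ Γ, I.card = h ∧ Set.InjOn f I ∧ (∀ u ∈ I, f u ∈ S) ∧
      ∀ u ∈ I, 1 ≤ ∑ x ∈ Finset.univ.erase u, ω u (f u) x * (if f x = f u then 1 else 0)) := by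
    intro f hf
    obtain ⟨I, h1, h2, h3, h4, h5⟩ := (Finset.mem_filter.1 hf).2
    refine Finset.mem_filter.2 ⟨Finset.mem_univ _, I, h1, h2, h3, h4, fun u hu => ?_⟩
    have hge : ∀ b, coll N U f b u →
        1 ≤ ∑ x ∈ Finset.univ.erase u, (if x ∈ N b ∩ U then (1:ℝ) else 0) * (if f x = f u then 1 else 0) := by
      rintro b ⟨x, hx, hxu, hfx⟩
      have := Finset.single_le_sum (f := fun x => (if x ∈ N b ∩ U then (1:ℝ) else 0) * (if f x = f u then 1 else 0))
        (s := Finset.univ.erase u) (fun y _ => by positivity) (Finset.mem_erase.2 ⟨hxu, Finset.mem_univ x⟩)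
      simpa [hx, hfx] using this
    have hge0 : ∀ b, 0 ≤ ∑ x ∈ Finset.univ.erase u, (if x ∈ N b ∩ U then (1:ℝ) else 0) * (if f x = f u then 1 else 0) :=
      fun b => Finset.sum_nonneg fun y _ => by positivity
    have hsplit : ∑ x ∈ Finset.univ.erase u, ω u (f u) x * (if f x = f u then 1 else 0)
      = 2 / ((Tg u (f u)).card : ℝ) * (∑ b ∈ Tg u (f u), ∑ x ∈ Finset.univ.erase u,
          (if x ∈ N b ∩ U then (1:ℝ) else 0) * (if f x = f u then 1 else 0)) +
        ∑ x ∈ Finset.univ.erase u, (if x ∈ N w ∩ U then (1:ℝ) else 0) * (if f x = f u then 1 else 0) := by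
      simp only [ω, add_mul, Finset.sum_add_distrib]
      congr 1
      rw [Finset.sum_comm, Finset.mul_sum]
      refine Finset.sum_congr rfl fun x _ => ?_
      rw [mul_assoc, Finset.sum_mul]
    rw [hsplit]
    rcases h5 u hu with hb | hc
    · have hpos : 0 < (Tg u (f u)).card := by
        by_contra hz
        have hz : (Tg u (f u)).card = 0 := by omega
        unfold bad at hb
        have := Finset.card_filter_le (Tg u (f u)) (fun b => coll N U f b u)
        omega
      have hpos' : (0:ℝ) < (Tg u (f u)).card := by exact_mod_cast hpos
      have hcnt : (((Tg u (f u)).filter fun b => coll N U f b u).card : ℝ) ≤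
          ∑ b ∈ Tg u (f u), ∑ x ∈ Finset.univ.erase u,
          (if x ∈ N b ∩ U then (1:ℝ) else 0) * (if f x = f u then 1 else 0) := by
        rw [← Finset.sum_boole]
        refine Finset.sum_le_sum fun b _ => ?_
        split_ifs with hcb
        · exact hge b hcb
        · exact hge0 b
      have hb' : ((Tg u (f u)).card : ℝ) < 2 * ((Tg u (f u)).filter fun b => coll N U f b u).card := by
        unfold bad at hb
        exact_mod_cast hb
      have : 1 ≤ 2 / ((Tg u (f u)).card : ℝ) * (∑ b ∈ Tg u (f u), ∑ x ∈ Finset.univ.erase u,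
          (if x ∈ N b ∩ U then (1:ℝ) else 0) * (if f x = f u then 1 else 0)) := by
        rw [div_mul_eq_mul_div, le_div_iff₀ hpos']
        linarith
      have := hge0 w
      linarith
    · have h1 := hge w hc
      have : 0 ≤ 2 / ((Tg u (f u)).card : ℝ) * (∑ b ∈ Tg u (f u), ∑ x ∈ Finset.univ.erase u,
          (if x ∈ N b ∩ U then (1:ℝ) else 0) * (if f x = f u then 1 else 0)) :=
        mul_nonneg (by positivity) (Finset.sum_nonneg fun b _ => hge0 b)
      linarith
  exact_mod_cast Finset.card_le_card this

open Classical in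
theorem round0 [Nonempty Y] (N : V → Finset V) (hN : ∀ x y, x ∈ N y → y ∈ N x)
    (d : ℕ) (hd : ∀ w, (N w).card ≤ d)
    (U : Finset V) (n : ℕ) (hn : ∀ b, (N b ∩ U).card ≤ n) (Tg : V → Y → Finset V)
    (hTg : ∀ u c, Tg u c ⊆ N u) (A0 : Finset V) (Γ : V → Finset V) (hΓ : ∀ w ∈ A0, Γ w ⊆ N w)
    {ι : Type*} [Fintype ι] [DecidableEq ι] (S : ι → Finset Y) (r : V → ℕ) (h : ℕ)
    (hr : ∀ w ∈ A0, ∀ i, r w ≤ (S i).card) (p : ℝ) (hp0 : 0 ≤ p) (hp4 : 4 * p ≤ 1)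
    (hp : ∀ w ∈ A0, ∀ i, ((S i).card.choose (r w) : ℝ) *
        (((Fintype.card Y - (S i).card + r w : ℕ) : ℝ) / Fintype.card Y) ^ (Γ w).card +
        (Γ w).card.choose h * (((S i).card * (3 * n)) / (Fintype.card Y : ℝ) ^ 2) ^ h ≤ p)
    (hpΔ : 4 * p * (d ^ 6 * Fintype.card ι : ℕ) ≤ 1) :
    ∃ f : V → Y, ∀ w ∈ A0, ∀ i, r w <
      ((Γ w).filter fun u => f u ∈ S i ∧ ¬ bad N U Tg f u ∧ ¬ coll N U f w u).card + h := by
  let E1 : A0 × ι → Finset (V → Y) := fun wi =>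
    (Finset.univ.filter fun f : V → Y => ((Γ wi.1).image f ∩ S wi.2).card ≤ r wi.1)
  let E2 : A0 × ι → Finset (V → Y) := fun wi =>
    (Finset.univ.filter fun f : V → Y => ∃ I ⊆ Γ wi.1, I.card = h ∧ Set.InjOn f I ∧ (∀ u ∈ I, f u ∈ S wi.2) ∧
      ∀ u ∈ I, (bad N U Tg f u ∨ coll N U f wi.1 u))
  obtain ⟨f, hf⟩ := lll (fun wi => E1 wi ∪ E2 wi) (fun wi : A0 × ι => nb3 N wi.1) (by
    rintro ⟨⟨w, hw⟩, i⟩ f g hfg hf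
    simp only at hfg
    have hwΓ : ∀ u ∈ Γ w, f u = g u := fun u hu => hfg u (by
      have := hΓ w hw hu
      exact (mem_nb3 N w u).2 ⟨u, this, w, hN _ _ this, this⟩)
    have hwN : ∀ u ∈ N w, f u = g u := fun u this => hfg u (by
      exact (mem_nb3 N w u).2 ⟨u, this, w, hN _ _ this, this⟩)
    rcases Finset.mem_union.1 hf with hf | hf
    · refine Finset.mem_union_left _ ?_
      refine Finset.mem_filter.2 ⟨Finset.mem_univ _, ?_⟩
      have h1 := (Finset.mem_filter.1 hf).2
      simp only at h1 ⊢
      rwa [← Finset.image_congr (s := Γ w) (f := f) (g := g) (fun u hu => hwΓ u hu)]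
    · refine Finset.mem_union_right _ ?_
      refine Finset.mem_filter.2 ⟨Finset.mem_univ _, ?_⟩
      obtain ⟨I, h1, h2, h3, h4, h5⟩ := (Finset.mem_filter.1 hf).2
      refine ⟨I, h1, h2, ?_, ?_, ?_⟩
      · intro u hu v hv huv
        rw [← hwΓ u (h1 hu), ← hwΓ v (h1 hv)] at huv
        exact h3 hu hv huv
      · intro u hu
        rw [← hwΓ u (h1 hu)]
        exact h4 u hu
      · intro u hu
        have huw : u ∈ N w := hΓ w hw (h1 hu)
        rcases h5 u hu with hb | hc
        · left
          rwa [← bad_congr N U Tg f g u (hTg u) (hwN u huw)]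
          intro b hb x hx
          exact hfg x ((mem_nb3 N w x).2 ⟨u, huw, b, hb, hx⟩)
        · right
          rwa [← coll_congr N U f g w u (hwN u huw) hwN]) p hp0 hp4 (by
    rintro ⟨⟨w, hw⟩, i⟩
    have h1 := few_colours (Γ w) (S i) (r w) (hr w hw i)
    have h2 := round_event N hN U n hn Tg w (Γ w) (S i) h
    have h3 := hp w hw i
    have h4 : ((E1 (⟨w, hw⟩, i) ∪ E2 (⟨w, hw⟩, i)).card : ℝ) ≤ (E1 (⟨w, hw⟩, i)).card + (E2 (⟨w, hw⟩, i)).card := by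
      exact_mod_cast Finset.card_union_le _ _
    refine h4.trans ((add_le_add h1 h2).trans ?_)
    rw [← add_mul]
    gcongr) (d ^ 6 * Fintype.card ι) (by
    rintro ⟨⟨w, hw⟩, i⟩
    have hsub : (Finset.univ.filter fun w' : A0 × ι => ¬ Disjoint (nb3 N w) (nb3 N w'.1)).card ≤
        ((Finset.univ.filter fun w' => ¬ Disjoint (nb3 N w) (nb3 N w')) ×ˢ (Finset.univ : Finset ι)).card := by
      apply Finset.card_le_card_of_injOn (fun wi => ((wi.1 : V), wi.2))
      · rintro ⟨w', i'⟩ h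
        simpa using h
      · rintro ⟨⟨w1, _⟩, i1⟩ - ⟨⟨w2, _⟩, i2⟩ - h
        simpa using h
    refine hsub.trans ?_
    rw [Finset.card_product, Finset.card_univ]
    exact Nat.mul_le_mul_right _ (nb3_dep N hN d hd w)) hpΔ
  refine ⟨f, fun w hw i => ?_⟩
  have hfw := hf (⟨w, hw⟩, i)
  simp only [Finset.mem_union, not_or] at hfw
  obtain ⟨hf1, hf2⟩ := hfw
  simp only [E1, Finset.mem_filter, Finset.mem_univ, true_and, not_le] at hf1
  simp only [E2, Finset.mem_filter, Finset.mem_univ, true_and] at hf2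
  by_contra hcon
  push Not at hcon
  -- transversal
  obtain ⟨I0, hI0, hinj, himg⟩ : ∃ I0 ⊆ Γ w, Set.InjOn f I0 ∧ I0.image f = (Γ w).image f ∩ S i := by
    have : ∀ c ∈ (Γ w).image f ∩ S i, ∃ u ∈ Γ w, f u = c := by
      intro c hc
      exact Finset.mem_image.1 (Finset.mem_inter.1 hc).1
    have hnev : Nonempty V := ⟨w⟩
    choose! σ hσ1 hσ2 using this
    refine ⟨((Γ w).image f ∩ S i).image σ, ?_, ?_, ?_⟩
    · intro x hx
      obtain ⟨c, hc, rfl⟩ := Finset.mem_image.1 hx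
      exact hσ1 c hc
    · intro x hx y hy hxy
      obtain ⟨c, hc, rfl⟩ := Finset.mem_image.1 hx
      obtain ⟨c', hc', rfl⟩ := Finset.mem_image.1 hy
      rw [hσ2 c hc, hσ2 c' hc'] at hxy
      rw [hxy]
    · rw [Finset.image_image]
      ext c
      simp only [Finset.mem_image, Function.comp]
      constructor
      · rintro ⟨c', hc', rfl⟩
        rw [hσ2 c' hc']; exact hc'
      · intro hc
        exact ⟨c, hc, hσ2 c hc⟩
  have hI0c : I0.card = ((Γ w).image f ∩ S i).card := by
    rw [← himg, Finset.card_image_of_injOn hinj]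
  have hI0S : ∀ u ∈ I0, f u ∈ S i := by
    intro u hu
    have : f u ∈ I0.image f := Finset.mem_image_of_mem _ hu
    rw [himg] at this
    exact (Finset.mem_inter.1 this).2
  have hsplit := Finset.card_filter_add_card_filter_not (s := I0)
    (fun u => bad N U Tg f u ∨ coll N U f w u)
  have hgood : (I0.filter fun u => ¬ (bad N U Tg f u ∨ coll N U f w u)).card ≤
      ((Γ w).filter fun u => f u ∈ S i ∧ ¬ bad N U Tg f u ∧ ¬ coll N U f w u).card := by
    apply Finset.card_le_card
    intro u hu
    obtain ⟨hu1, hu2⟩ := Finset.mem_filter.1 hu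
    rw [not_or] at hu2
    exact Finset.mem_filter.2 ⟨hI0 hu1, hI0S u hu1, hu2⟩
  have hh : h ≤ (I0.filter fun u => bad N U Tg f u ∨ coll N U f w u).card := by omega
  obtain ⟨I, hI1, hI2⟩ := Finset.exists_subset_card_eq hh
  refine hf2 ⟨I, ?_, hI2, ?_, ?_, ?_⟩
  · exact hI1.trans ((Finset.filter_subset _ _).trans hI0)
  · exact hinj.mono (by exact_mod_cast hI1.trans (Finset.filter_subset _ _))
  · intro u hu
    exact hI0S u (Finset.mem_filter.1 (hI1 hu)).1
  · intro u hu
    exact (Finset.mem_filter.1 (hI1 hu)).2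

open Classical in
theorem round1 [Nonempty Y] (N : V → Finset V) (hN : ∀ x y, x ∈ N y → y ∈ N x)
    (d : ℕ) (hd : ∀ w, (N w).card ≤ d)
    (U : Finset V) (n : ℕ) (hn : ∀ b, (N b ∩ U).card ≤ n) (Tg : V → Y → Finset V)
    (hTg : ∀ u c, Tg u c ⊆ N u) (h : ℕ) (hnY : n ≤ Fintype.card Y)
    (hp4 : 8 * (Real.exp n * (3 * n / Fintype.card Y) ^ h) ≤ 1)
    (hpΔ : 8 * (Real.exp n * (3 * n / Fintype.card Y) ^ h) * (d ^ 6 : ℕ) ≤ 1) :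
    ∃ f : V → Y, ∀ w, ((N w ∩ U).filter fun u => bad N U Tg f u).card ≤ 2 * h := by
  have hY : (0:ℝ) < Fintype.card Y := by exact_mod_cast Fintype.card_pos
  obtain ⟨f, hf⟩ := round0 N hN d hd U n hn Tg hTg (Finset.univ.filter fun w => 2 * h < (N w ∩ U).card)
    (fun w => N w ∩ U) (fun w _ => Finset.inter_subset_left) (ι := Unit) (fun _ => Finset.univ)
    (fun w => (N w ∩ U).card - h) h (by
      intro w _ _
      rw [Finset.card_univ]
      have := hn w
      omega) (2 * (Real.exp n * (3 * n / Fintype.card Y) ^ h)) (by positivity) (by linarith) (by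
      intro w hw _
      have hw := (Finset.mem_filter.1 hw).2
      have hg := hn w
      set g := (N w ∩ U).card with hgdef
      simp only [Finset.card_univ]
      set m := Fintype.card Y with hm
      obtain ⟨t, ht⟩ : ∃ t, g = t + h := ⟨g - h, by omega⟩
      have htg : g - h = t := by omega
      rw [htg, Nat.sub_self, zero_add]
      have e1 : (m.choose t : ℝ) * ((t : ℝ) / m) ^ g ≤ Real.exp n * (3 * n / m) ^ h := by
        have a1 : (m.choose t : ℝ) ≤ (m:ℝ) ^ t / t.factorial := Nat.choose_le_pow_div t m
        have a2 : ((t:ℝ) ^ t) / t.factorial ≤ Real.exp t := Real.pow_div_factorial_le_exp t (by positivity) t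
        have a3 : (t : ℝ) ≤ n := by
          have : t ≤ n := by omega
          exact_mod_cast this
        calc (m.choose t : ℝ) * ((t : ℝ) / m) ^ g ≤ (m:ℝ) ^ t / t.factorial * ((t : ℝ) / m) ^ g := by gcongr
          _ = ((t:ℝ) ^ t) / t.factorial * ((t:ℝ) / m) ^ h := by
            rw [ht, pow_add, div_pow]
            field_simp
          _ ≤ Real.exp t * ((t:ℝ) / m) ^ h := by gcongr
          _ ≤ Real.exp n * (3 * n / m) ^ h := by
            have hn0 : (0:ℝ) ≤ n := by positivity
            gcongr
            linarith
      have e2 : (g.choose h : ℝ) * ((m : ℝ) * (3 * n) / (m:ℝ) ^ 2) ^ h ≤ Real.exp n * (3 * n / m) ^ h := by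
        have a1 : (m : ℝ) * (3 * n) / (m:ℝ) ^ 2 = 3 * n / m := by
          field_simp
        rw [a1]
        have a2 : (g.choose h : ℝ) ≤ Real.exp n := by
          have b1 : (g.choose h : ℝ) ≤ 2 ^ g := by exact_mod_cast Nat.choose_le_two_pow g h
          have b2 : (2:ℝ) ^ g ≤ Real.exp 1 ^ g := by
            gcongr
            have := Real.add_one_le_exp (1:ℝ)
            linarith
          have b3 : Real.exp 1 ^ g = Real.exp g := by rw [← Real.exp_nat_mul]; simp
          have b4 : Real.exp g ≤ Real.exp n := Real.exp_le_exp.2 (by exact_mod_cast hg)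
          linarith
        gcongr
      linarith) (by
      simp only [Fintype.card_unit, mul_one]
      linarith)
  refine ⟨f, fun w => ?_⟩
  by_cases hw : 2 * h < (N w ∩ U).card
  · have h1 := hf w (Finset.mem_filter.2 ⟨Finset.mem_univ _, hw⟩) ()
    have h2 : ((N w ∩ U).filter fun u => f u ∈ (Finset.univ : Finset Y) ∧ ¬ bad N U Tg f u ∧ ¬ coll N U f w u).card
        ≤ ((N w ∩ U).filter fun u => ¬ bad N U Tg f u).card := by
      apply Finset.card_le_card
      intro u hu
      obtain ⟨hu1, hu2⟩ := Finset.mem_filter.1 hu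
      exact Finset.mem_filter.2 ⟨hu1, hu2.2.1⟩
    have h3 := Finset.card_filter_add_card_filter_not (s := N w ∩ U) (fun u => bad N U Tg f u)
    omega
  · exact (Finset.card_filter_le _ _).trans (by omega)
end
end KRS

namespace KRS
section
set_option linter.unusedSectionVars false
set_option linter.unusedVariables false
variable {V X : Type*} [Fintype V] [DecidableEq V] [DecidableEq X]

theorem coll_comp {Y : Type*} (e : Y → X) (he : Function.Injective e) (N : V → Finset V) (U : Finset V)
    (f : V → Y) (b u : V) : coll N U (fun v => e (f v)) b u ↔ coll N U f b u := by
  unfold coll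
  simp only [he.eq_iff]

theorem bad_comp {Y : Type*} (e : Y → X) (he : Function.Injective e) (N : V → Finset V) (U : Finset V)
    (Tg : V → X → Finset V) (f : V → Y) (u : V) :
    bad N U Tg (fun v => e (f v)) u ↔ bad N U (fun u c => Tg u (e c)) f u := by
  classical
  unfold bad
  rw [Finset.filter_congr (fun b _ => coll_comp e he N U f b u)]

theorem bad_mono (N : V → Finset V) (U U' : Finset V) (Tg : V → X → Finset V) (f g : V → X) (u : V)
    (hu : f u = g u) (h : ∀ b, coll N U f b u → coll N U' g b u) (hb : bad N U Tg f u) :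
    bad N U' Tg g u := by
  classical
  unfold bad at hb ⊢
  rw [← hu]
  refine hb.trans_le (Nat.mul_le_mul_left 2 (Finset.card_le_card ?_))
  intro b hb
  obtain ⟨h1, h2⟩ := Finset.mem_filter.1 hb
  exact Finset.mem_filter.2 ⟨h1, h b h2⟩

open Classical in
theorem merge (N : V → Finset V) (U : Finset V) (Tg : V → X → Finset V) (P1 P2 : Finset X)
    (hdis : Disjoint P1 P2) (f1 f2 : V → X) (h1 : ∀ u ∈ U, f1 u ∈ P1)
    (h2 : ∀ u ∈ U.filter (fun u => bad N U Tg f1 u), f2 u ∈ P2)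
    (h2b : ∀ u ∈ U.filter (fun u => bad N U Tg f1 u),
      ¬ bad N (U.filter fun u => bad N U Tg f1 u) Tg f2 u) :
    ∃ f : V → X, (∀ u ∈ U, f u ∈ P1 ∪ P2) ∧ ∀ u ∈ U, ¬ bad N U Tg f u := by
  refine ⟨fun u => if bad N U Tg f1 u then f2 u else f1 u, ?_, ?_⟩
  · intro u hu
    by_cases hb : bad N U Tg f1 u
    · simp only [hb, if_true]
      exact Finset.mem_union_right _ (h2 u (Finset.mem_filter.2 ⟨hu, hb⟩))
    · simp only [hb, if_false]
      exact Finset.mem_union_left _ (h1 u hu)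
  · intro u hu hbad
    by_cases hb : bad N U Tg f1 u
    · have hu' := Finset.mem_filter.2 ⟨hu, hb⟩
      refine h2b u hu' (bad_mono N U _ Tg _ f2 u (by simp [hb]) ?_ hbad)
      rintro b ⟨x, hx, hxu, hfx⟩
      simp only [hb, if_true] at hfx
      obtain ⟨hxb, hxU⟩ := Finset.mem_inter.1 hx
      by_cases hbx : bad N U Tg f1 x
      · simp only [hbx, if_true] at hfx
        exact ⟨x, Finset.mem_inter.2 ⟨hxb, Finset.mem_filter.2 ⟨hxU, hbx⟩⟩, hxu, hfx⟩
      · simp only [hbx, if_false] at hfx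
        exact absurd (h2 u hu') (fun h => Finset.disjoint_left.1 hdis (h1 x hxU) (hfx ▸ h))
    · refine hb (bad_mono N U _ Tg _ f1 u (by simp [hb]) ?_ hbad)
      rintro b ⟨x, hx, hxu, hfx⟩
      simp only [hb, if_false] at hfx
      obtain ⟨hxb, hxU⟩ := Finset.mem_inter.1 hx
      by_cases hbx : bad N U Tg f1 x
      · simp only [hbx, if_true] at hfx
        exact absurd (h2 x (Finset.mem_filter.2 ⟨hxU, hbx⟩))
          (fun h => Finset.disjoint_left.1 hdis (h1 u hu) (hfx ▸ h))
      · simp only [hbx, if_false] at hfx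
        exact ⟨x, hx, hxu, hfx⟩

theorem greedy (N : V → Finset V) (hN : ∀ x y, x ∈ N y → y ∈ N x)
    (d : ℕ) (hd : ∀ w, (N w).card ≤ d) (U : Finset V) (k : ℕ) (hk : ∀ b, (N b ∩ U).card ≤ k)
    (Tg : V → X → Finset V) (hTg : ∀ u c, Tg u c ⊆ N u) (P : Finset X) (hP : d * k < P.card) :
    ∃ f : V → X, (∀ u ∈ U, f u ∈ P) ∧ ∀ u ∈ U, ¬ bad N U Tg f u := by
  classical
  have hPne : P.Nonempty := Finset.card_pos.1 (by omega)
  have key : ∀ W : Finset V, W ⊆ U → ∃ f : V → X, (∀ u ∈ W, f u ∈ P) ∧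
      ∀ u ∈ W, ∀ x ∈ W, x ≠ u → ∀ b, u ∈ N b → x ∈ N b → f x ≠ f u := by
    intro W
    induction W using Finset.induction_on with
    | empty => intro _; exact ⟨fun _ => hPne.choose, by simp, by simp⟩
    | insert v W hv ih =>
      intro hW
      obtain ⟨f, hf1, hf2⟩ := ih ((Finset.subset_insert _ _).trans hW)
      have hcard : (((N v).biUnion fun b => N b ∩ U).image f).card < P.card := by
        refine lt_of_le_of_lt (Finset.card_image_le.trans ((Finset.card_biUnion_le_card_mul _ _ _
          (fun b _ => hk b)).trans (Nat.mul_le_mul_right _ (hd v)))) hP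
      obtain ⟨c, hcP, hc⟩ := Finset.exists_mem_notMem_of_card_lt_card hcard
      have hav : ∀ x ∈ W, ∀ b, v ∈ N b → x ∈ N b → f x ≠ c := by
        intro x hx b hvb hxb hfx
        apply hc
        refine Finset.mem_image.2 ⟨x, Finset.mem_biUnion.2 ⟨b, hN _ _ hvb, ?_⟩, hfx⟩
        exact Finset.mem_inter.2 ⟨hxb, hW (Finset.mem_insert_of_mem hx)⟩
      have hne : ∀ x ∈ W, x ≠ v := fun x hx h => hv (h ▸ hx)
      refine ⟨Function.update f v c, ?_, ?_⟩
      · intro u hu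
        rcases Finset.mem_insert.1 hu with rfl | hu
        · simpa using hcP
        · rw [Function.update_of_ne (hne u hu)]; exact hf1 u hu
      · intro u hu x hx hxu b hub hxb
        rw [Finset.mem_insert] at hu hx
        rcases hu with hu | hu <;> rcases hx with hx | hx
        · exact absurd (hx.trans hu.symm) hxu
        · subst hu
          rw [Function.update_self, Function.update_of_ne (hne x hx)]
          exact hav x hx b hub hxb
        · subst hx
          rw [Function.update_self, Function.update_of_ne (hne u hu)]
          exact (hav u hu b hxb hub).symm
        · rw [Function.update_of_ne (hne u hu), Function.update_of_ne (hne x hx)]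
          exact hf2 u hu x hx hxu b hub hxb
  obtain ⟨f, hf1, hf2⟩ := key U subset_rfl
  refine ⟨f, hf1, fun u hu hb => ?_⟩
  unfold bad at hb
  have : ((Tg u (f u)).filter fun b => coll N U f b u) = ∅ := by
    rw [Finset.filter_eq_empty_iff]
    rintro b hbT ⟨x, hx, hxu, hfx⟩
    obtain ⟨hxb, hxU⟩ := Finset.mem_inter.1 hx
    exact hf2 u hu x hxU hxu b (hN _ _ (hTg _ _ hbT)) hxb hfx
  rw [this] at hb
  simp at hb

open Classical in
theorem round1' (N : V → Finset V) (hN : ∀ x y, x ∈ N y → y ∈ N x)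
    (d : ℕ) (hd : ∀ w, (N w).card ≤ d)
    (U : Finset V) (n : ℕ) (hn : ∀ b, (N b ∩ U).card ≤ n) (Tg : V → X → Finset V)
    (hTg : ∀ u c, Tg u c ⊆ N u) (h : ℕ) (P : Finset X) (hP0 : 0 < P.card) (hnY : n ≤ P.card)
    (hd1 : 1 ≤ d)
    (hpΔ : 8 * (Real.exp n * (3 * n / P.card) ^ h) * (d ^ 6 : ℕ) ≤ 1) :
    ∃ f : V → X, (∀ u, f u ∈ P) ∧ ∀ w, (N w ∩ (U.filter fun u => bad N U Tg f u)).card ≤ 2 * h := by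
  have hne : Nonempty P := by
    obtain ⟨x, hx⟩ := Finset.card_pos.1 hP0
    exact ⟨⟨x, hx⟩⟩
  have hp4 : 8 * (Real.exp n * (3 * n / P.card) ^ h) ≤ 1 := by
    refine le_trans ?_ hpΔ
    apply le_mul_of_one_le_right (by positivity)
    exact_mod_cast Nat.one_le_pow _ _ hd1
  obtain ⟨f, hf⟩ := round1 (Y := P) N hN d hd U n hn (fun u c => Tg u c) (fun u c => hTg u c) h
    (by rwa [Fintype.card_coe]) (by rwa [Fintype.card_coe]) (by rwa [Fintype.card_coe])
  refine ⟨fun v => f v, fun u => (f u).2, fun w => ?_⟩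
  refine le_trans (Finset.card_le_card ?_) (hf w)
  intro u hu
  obtain ⟨h1, h2⟩ := Finset.mem_inter.1 hu
  obtain ⟨h2, h3⟩ := Finset.mem_filter.1 h2
  refine Finset.mem_filter.2 ⟨Finset.mem_inter.2 ⟨h1, h2⟩, ?_⟩
  exact (bad_comp (Subtype.val) Subtype.val_injective N U Tg f u).1 h3

theorem stages (N : V → Finset V) (hN : ∀ x y, x ∈ N y → y ∈ N x)
    (d : ℕ) (hd : ∀ w, (N w).card ≤ d) (hd1 : 1 ≤ d) (Tg : V → X → Finset V)
    (hTg : ∀ u c, Tg u c ⊆ N u) (K n1 : ℕ) (hK : K = 3 ^ 33) (hn14 : 14 ≤ n1)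
    (hbig : 8 * (d:ℝ) ^ 6 ≤ Real.exp n1)
    (hsm : ∀ n : ℕ, n < n1 → n ≤ d ∧ 8 * (Real.exp n * (3 * n / d) ^ 28) * (d ^ 6 : ℕ) ≤ 1) :
    ∀ n : ℕ, ∀ U : Finset V, (∀ b, (N b ∩ U).card ≤ n) → ∀ P : Finset X,
      2 * K * n + 60 * d ≤ P.card →
      ∃ f : V → X, (∀ u ∈ U, f u ∈ P) ∧ ∀ u ∈ U, ¬ bad N U Tg f u := by
  classical
  intro n
  induction n using Nat.strong_induction_on with
  | _ n ih =>
  intro U hU P hP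
  by_cases hn : n < n1
  · obtain ⟨hnd, hsm⟩ := hsm n hn
    obtain ⟨P1, hP1, hP1c⟩ := Finset.exists_subset_card_eq (show d ≤ P.card by omega)
    obtain ⟨f1, hf1, hf1b⟩ := round1' N hN d hd U n hU Tg hTg 28 P1 (by omega) (by omega) hd1
      (by rwa [hP1c])
    have hc : (P \ P1).card = P.card - d := by rw [Finset.card_sdiff_of_subset hP1, hP1c]
    obtain ⟨f2, hf2, hf2b⟩ := greedy N hN d hd _ _ hf1b Tg hTg (P \ P1) (by omega)
    obtain ⟨f, h1, h2⟩ := merge N U Tg P1 (P \ P1) Finset.disjoint_sdiff f1 f2 (fun u _ => hf1 u) hf2 hf2b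
    refine ⟨f, fun u hu => ?_, h2⟩
    have := h1 u hu
    rwa [Finset.union_sdiff_of_subset hP1] at this
  · push Not at hn
    have hKn : K * n ≤ P.card := by nlinarith
    obtain ⟨P1, hP1, hP1c⟩ := Finset.exists_subset_card_eq hKn
    have hK1 : 1 ≤ K := by rw [hK]; norm_num
    have hn0 : 0 < n := by omega
    have hnr : (0:ℝ) < n := by exact_mod_cast hn0
    obtain ⟨f1, hf1, hf1b⟩ := round1' N hN d hd U n hU Tg hTg (n / 8) P1 (by
        rw [hP1c]; positivity) (by rw [hP1c]; nlinarith) hd1 (by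
        rw [hP1c]
        have e1 : (3 * (n:ℝ) / ((K * n : ℕ) : ℝ)) = (1 / 3) ^ 32 := by
          rw [hK]; push_cast; field_simp; norm_num
        rw [e1, ← pow_mul]
        have e2 : 2 * n ≤ 32 * (n / 8) := by omega
        have e3 : ((1:ℝ) / 3) ^ (32 * (n / 8)) ≤ (1 / 3) ^ (2 * n) :=
          pow_le_pow_of_le_one (by norm_num) (by norm_num) e2
        have e4 : ((1:ℝ) / 3) ^ (2 * n) ≤ Real.exp (-1) ^ (2 * n) := by
          gcongr
          rw [Real.exp_neg, one_div]
          apply inv_anti₀ (Real.exp_pos _)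
          have := Real.exp_one_lt_d9
          linarith
        have e5 : Real.exp (-1) ^ (2 * n) = Real.exp (-n) * Real.exp (-n) := by
          rw [← Real.exp_nat_mul, ← Real.exp_add]
          congr 1; push_cast; ring
        have e6 : Real.exp n * (1 / 3) ^ (32 * (n / 8)) ≤ Real.exp (-n) := by
          calc Real.exp n * (1 / 3) ^ (32 * (n / 8)) ≤ Real.exp n * (Real.exp (-n) * Real.exp (-n)) := by
                gcongr
                linarith
            _ = Real.exp (-n) := by rw [← mul_assoc, ← Real.exp_add]; simp
        have e7 : 8 * (d:ℝ) ^ 6 ≤ Real.exp n := hbig.trans (Real.exp_le_exp.2 (by exact_mod_cast hn))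
        push_cast
        calc 8 * (Real.exp n * (1 / 3) ^ (32 * (n / 8))) * (d:ℝ) ^ 6
            ≤ 8 * Real.exp (-n) * (d:ℝ) ^ 6 := by gcongr
          _ = (8 * (d:ℝ) ^ 6) * Real.exp (-n) := by ring
          _ ≤ Real.exp n * Real.exp (-n) := by gcongr
          _ = 1 := by rw [← Real.exp_add]; simp)
    have hc : (P \ P1).card = P.card - K * n := by rw [Finset.card_sdiff_of_subset hP1, hP1c]
    have hlt : 2 * (n / 8) < n := by omega
    obtain ⟨f2, hf2, hf2b⟩ := ih _ hlt _ hf1b (P \ P1) (by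
      rw [hc]
      have : 2 * K * (2 * (n / 8)) ≤ K * n := by
        calc 2 * K * (2 * (n / 8)) = K * (4 * (n / 8)) := by ring
          _ ≤ K * n := Nat.mul_le_mul_left _ (by omega)
      have h3 : 2 * K * n = K * n + K * n := by ring
      omega)
    obtain ⟨f, h1, h2⟩ := merge N U Tg P1 (P \ P1) Finset.disjoint_sdiff f1 f2 (fun u _ => hf1 u) hf2 hf2b
    refine ⟨f, fun u hu => ?_, h2⟩
    have := h1 u hu
    rwa [Finset.union_sdiff_of_subset hP1] at this
end

theorem leftover_params : ∃ d0 : ℕ, ∀ d : ℕ, d0 ≤ d → ∃ n1 : ℕ, 1 ≤ d ∧ 14 ≤ n1 ∧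
    8 * (d:ℝ) ^ 6 ≤ Real.exp n1 ∧
    (∀ n : ℕ, n < n1 → n ≤ d ∧ 8 * (Real.exp n * (3 * n / d) ^ 28) * (d ^ 6 : ℕ) ≤ 1) := by
  have hlog : ∀ᶠ x : ℝ in Filter.atTop, 21 * Real.log x ≤ Real.sqrt x := by
    have := (isLittleO_log_rpow_atTop (r := 1/2) (by norm_num)).bound (show (0:ℝ) < 1/21 by norm_num)
    filter_upwards [this, Filter.eventually_ge_atTop 1] with x hx h1
    rw [Real.norm_of_nonneg (Real.log_nonneg h1), Real.norm_of_nonneg (by positivity),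
      ← Real.sqrt_eq_rpow] at hx
    linarith
  have hev : ∀ᶠ d : ℕ in Filter.atTop, 21 * Real.log d ≤ Real.sqrt d :=
    tendsto_natCast_atTop_atTop.eventually hlog
  obtain ⟨d1, hd1⟩ := Filter.eventually_atTop.1 hev
  refine ⟨max d1 16, fun d hd => ⟨⌈7 * Real.log d⌉₊, ?_⟩⟩
  have hdl := hd1 d (le_trans (le_max_left _ _) hd)
  have hd16 : 16 ≤ d := le_trans (le_max_right _ _) hd
  have hdr : (16:ℝ) ≤ d := by exact_mod_cast hd16
  have hdpos : (0:ℝ) < d := by linarith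
  have hlog2 : 2 ≤ Real.log d := by
    rw [Real.le_log_iff_exp_le hdpos]
    have : Real.exp 2 = Real.exp 1 * Real.exp 1 := by rw [← Real.exp_add]; norm_num
    have h3 := Real.exp_one_lt_d9
    have h4 := Real.exp_pos 1
    nlinarith
  have hexp7 : Real.exp (7 * Real.log d) = (d:ℝ) ^ 7 := by
    rw [mul_comm, Real.exp_mul, Real.exp_log hdpos]
    norm_cast
  refine ⟨by omega, ?_, ?_, ?_⟩
  · have : (14:ℝ) ≤ (⌈7 * Real.log d⌉₊ : ℝ) := le_trans (by linarith) (Nat.le_ceil _)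
    exact_mod_cast this
  · calc 8 * (d:ℝ) ^ 6 ≤ d * (d:ℝ) ^ 6 := by gcongr; linarith
      _ = (d:ℝ) ^ 7 := by ring
      _ = _ := hexp7.symm
      _ ≤ _ := Real.exp_le_exp.2 (Nat.le_ceil _)
  · intro n hn
    have hn' : (n:ℝ) < 7 * Real.log d := Nat.lt_ceil.1 hn
    have hs1 : 1 ≤ Real.sqrt d := by rw [Real.one_le_sqrt]; linarith
    have hss : Real.sqrt d * Real.sqrt d = d := Real.mul_self_sqrt hdpos.le
    have h3n : 3 * (n:ℝ) ≤ Real.sqrt d := by linarith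
    constructor
    · have : (n:ℝ) ≤ d := by nlinarith
      exact_mod_cast this
    · have h1 : Real.exp n ≤ (d:ℝ) ^ 7 := by
        rw [← hexp7]; exact Real.exp_le_exp.2 hn'.le
      have h2 : (3 * (n:ℝ) / d) ^ 28 ≤ 1 / (d:ℝ) ^ 14 := by
        calc (3 * (n:ℝ) / d) ^ 28 ≤ (Real.sqrt d / d) ^ 28 := by gcongr
          _ = ((Real.sqrt d) ^ 2) ^ 14 / (d:ℝ) ^ 28 := by rw [div_pow, ← pow_mul]
          _ = 1 / (d:ℝ) ^ 14 := by
            rw [Real.sq_sqrt hdpos.le]; field_simp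
      push_cast
      calc 8 * (Real.exp (n:ℝ) * (3 * (n:ℝ) / (d:ℝ)) ^ 28) * (d:ℝ) ^ 6
          ≤ 8 * ((d:ℝ) ^ 7 * (1 / (d:ℝ) ^ 14)) * (d:ℝ) ^ 6 := by gcongr
        _ = 8 / (d:ℝ) := by field_simp
        _ ≤ 1 := by rw [div_le_one hdpos]; linarith

/-- leftover colouring -/
theorem leftover : ∃ d0 : ℕ, ∀ d : ℕ, d0 ≤ d → ∀ (V X : Type) [Fintype V] [DecidableEq V] [DecidableEq X]
    (N : V → Finset V), (∀ x y, x ∈ N y → y ∈ N x) → (∀ w, (N w).card ≤ d) →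
    ∀ Tg : V → X → Finset V, (∀ u c, Tg u c ⊆ N u) → ∀ U : Finset V, ∀ P : Finset X,
      (2 * 3 ^ 33 + 60) * d ≤ P.card →
      ∃ f : V → X, (∀ u ∈ U, f u ∈ P) ∧ ∀ u ∈ U, ¬ bad N U Tg f u := by
  obtain ⟨d0, hd0⟩ := leftover_params
  refine ⟨d0, ?_⟩
  intro d hd V X _ _ _ N hN hNd Tg hTg U P hP
  obtain ⟨n1, h1, h2, h3, h4⟩ := hd0 d hd
  refine stages N hN d hNd h1 Tg hTg (3 ^ 33) n1 rfl h2 h3 h4 d U ?_ P (by omega)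
  intro b
  exact (Finset.card_le_card Finset.inter_subset_left).trans (hNd b)
end KRS

namespace KRS

theorem choose_le_exp (n k : ℕ) (hk : 0 < k) :
    (n.choose k : ℝ) ≤ (Real.exp 1 * n / k) ^ k := by
  have a1 : (n.choose k : ℝ) ≤ (n:ℝ) ^ k / k.factorial := Nat.choose_le_pow_div k n
  have a2 : ((k:ℝ) ^ k) / k.factorial ≤ Real.exp k := Real.pow_div_factorial_le_exp k (by positivity) k
  have hk' : (0:ℝ) < k := by exact_mod_cast hk
  have a3 : Real.exp k = Real.exp 1 ^ k := by rw [← Real.exp_nat_mul]; simp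
  calc (n.choose k : ℝ) ≤ (n:ℝ) ^ k / k.factorial := a1
    _ = ((n:ℝ) / k) ^ k * ((k:ℝ) ^ k / k.factorial) := by rw [div_pow]; field_simp
    _ ≤ ((n:ℝ) / k) ^ k * Real.exp k := by gcongr
    _ = _ := by rw [a3, ← mul_pow]; congr 1; ring

theorem round0_num (d P h m s g : ℕ) (hP : 0 < P) (hh : 0 < h) (h1 : 4000 * P * h ≤ d) (h2 : d ≤ 8000 * P * h)
    (hm1 : 150000 * d ≤ m) (hm2 : m ≤ 300000 * d) (hs1 : s * P ≤ m) (hs2 : m ≤ 2 * s * P)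
    (hg1 : d ≤ 4 * g) (hg2 : g ≤ d) :
    2 * h ≤ s ∧ (s.choose (2 * h) : ℝ) * (((m - s + 2 * h : ℕ) : ℝ) / m) ^ g +
      g.choose h * ((s * (3 * d)) / (m : ℝ) ^ 2) ^ h ≤ 2 * (1 / 2) ^ h := by
  have hPr : (1:ℝ) ≤ P := by exact_mod_cast hP
  have hP0 : (0:ℝ) < P := by linarith
  have hhr : (1:ℝ) ≤ h := by exact_mod_cast hh
  have h1r : 4000 * (P:ℝ) * h ≤ d := by exact_mod_cast h1
  have h2r : (d:ℝ) ≤ 8000 * P * h := by exact_mod_cast h2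
  have hm1r : 150000 * (d:ℝ) ≤ m := by exact_mod_cast hm1
  have hm2r : (m:ℝ) ≤ 300000 * d := by exact_mod_cast hm2
  have hs1r : (s:ℝ) * P ≤ m := by exact_mod_cast hs1
  have hs2r : (m:ℝ) ≤ 2 * s * P := by exact_mod_cast hs2
  have hg1r : (d:ℝ) ≤ 4 * g := by exact_mod_cast hg1
  have hg2r : (g:ℝ) ≤ d := by exact_mod_cast hg2
  have hPh : (1:ℝ) ≤ P * h := by nlinarith
  have hd0 : (0:ℝ) < d := by nlinarith
  have hm0 : (0:ℝ) < m := by nlinarith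
  -- s lower bound: s ≥ m/(2P) ≥ 75000 d / P ≥ 75000*4000 h
  have hs3 : 1000 * (h:ℝ) ≤ s := by
    have : 1000 * (h:ℝ) * P ≤ s * P := by nlinarith
    exact le_of_mul_le_mul_right this hP0
  have hs0 : (0:ℝ) < s := by linarith
  have h2hs : 2 * h ≤ s := by
    have : (2:ℝ) * h ≤ s := by linarith
    exact_mod_cast this
  have hsm : s ≤ m := le_trans (Nat.le_mul_of_pos_right s hP) hs1
  refine ⟨h2hs, ?_⟩
  have he1 := Real.exp_one_lt_d9
  have he0 := Real.exp_pos (1:ℝ)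
  -- s ≤ m / P ≤ 300000 d / P ≤ 300000 * 8000 h
  have hs4 : (s:ℝ) ≤ 300000 * 8000 * h := by
    have : (s:ℝ) * P ≤ 300000 * 8000 * h * P := by nlinarith
    exact le_of_mul_le_mul_right this hP0
  have t1 : (s.choose (2 * h) : ℝ) ≤ Real.exp (46 * h) := by
    have c1 := choose_le_exp s (2 * h) (by omega)
    have c2 : Real.exp 1 * s / ((2 * h : ℕ) : ℝ) ≤ Real.exp 1 * (300000 * 4000) := by
      rw [div_le_iff₀ (by positivity)]
      push_cast
      nlinarith
    have c3 : Real.exp 1 * (300000 * 4000) ≤ Real.exp 23 := by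
      have : Real.exp 23 = Real.exp 1 * Real.exp 1 ^ 22 := by
        rw [← Real.exp_nat_mul, ← Real.exp_add]; norm_num
      rw [this]
      gcongr
      have h27 : (2.7:ℝ) ≤ Real.exp 1 := by have := Real.exp_one_gt_d9; linarith
      calc (300000 * 4000 : ℝ) ≤ 2.7 ^ 22 := by norm_num
        _ ≤ _ := by gcongr
    calc (s.choose (2 * h) : ℝ) ≤ (Real.exp 1 * s / ((2 * h : ℕ) : ℝ)) ^ (2 * h) := c1
      _ ≤ (Real.exp 23) ^ (2 * h) := by
        gcongr
        exact c2.trans c3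
      _ = Real.exp (46 * h) := by rw [← Real.exp_nat_mul]; push_cast; ring_nf
  have t2 : (((m - s + 2 * h : ℕ) : ℝ) / m) ^ g ≤ Real.exp (-(200 * h)) := by
    have c1 : ((m - s + 2 * h : ℕ) : ℝ) = m - s + 2 * h := by
      push_cast [Nat.cast_sub hsm]; ring
    have c2 : ((m - s + 2 * h : ℕ) : ℝ) / m ≤ Real.exp (-(s - 2 * h) / m) := by
      rw [c1]
      have := Real.add_one_le_exp (-((s:ℝ) - 2 * h) / m)
      refine le_trans (le_of_eq ?_) this
      field_simp
      ring
    have c3 : (200 * h : ℝ) ≤ g * ((s - 2 * h) / m) := by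
      rw [← mul_div_assoc, le_div_iff₀ hm0]
      -- g ≥ d/4, s - 2h ≥ .9 s, s ≥ m/(2P): g(s-2h) ≥ .9 d m /(8P) ≥ .9 * 4000 h m/8 = 450 h m
      have k1 : (s:ℝ) * (9 / 10) ≤ s - 2 * h := by linarith
      have k2 : (d:ℝ) / 4 * (s * (9 / 10)) ≤ g * (s - 2 * h) := by
        apply mul_le_mul _ k1 (by positivity) (by positivity)
        linarith
      have k3 : (4000 * P * h : ℝ) / 4 * (s * (9 / 10)) ≤ d / 4 * (s * (9 / 10)) := by gcongr
      have k4 : (4000 * P * h : ℝ) / 4 * (s * (9 / 10)) = 450 * h * (2 * s * P) := by ring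
      have k5 : 450 * (h:ℝ) * m ≤ 450 * h * (2 * s * P) := by gcongr
      have k6 : (0:ℝ) ≤ h * m := by positivity
      linarith
    calc _ ≤ (Real.exp (-(s - 2 * h) / m)) ^ g := by gcongr
      _ = Real.exp (-(g * ((s - 2 * h) / m))) := by rw [← Real.exp_nat_mul]; ring_nf
      _ ≤ _ := Real.exp_le_exp.2 (by linarith)
  have t3 : (s.choose (2 * h) : ℝ) * (((m - s + 2 * h : ℕ) : ℝ) / m) ^ g ≤ (1 / 2) ^ h := by
    calc _ ≤ Real.exp (46 * h) * Real.exp (-(200 * h)) := by gcongr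
      _ = Real.exp (-154) ^ h := by rw [← Real.exp_add, ← Real.exp_nat_mul]; ring_nf
      _ ≤ (1 / 2) ^ h := by
        gcongr
        rw [Real.exp_neg, one_div]
        apply inv_anti₀ (by norm_num)
        have := Real.add_one_le_exp (154:ℝ)
        linarith
  have t4 : (g.choose h : ℝ) * ((s * (3 * d)) / (m : ℝ) ^ 2) ^ h ≤ (1 / 2) ^ h := by
    have c1 := choose_le_exp g h hh
    calc _ ≤ (Real.exp 1 * g / h) ^ h * ((s * (3 * d)) / (m : ℝ) ^ 2) ^ h := by gcongr
      _ = (Real.exp 1 * g / h * ((s * (3 * d)) / (m : ℝ) ^ 2)) ^ h := by rw [mul_pow]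
      _ ≤ _ := by
        gcongr
        rw [div_mul_div_comm, div_le_div_iff₀ (by positivity) (by norm_num)]
        -- 2 e g s 3 d ≤ h m^2
        have k1 : (s:ℝ) * d ≤ 8000 * h * m := by
          have : (s:ℝ) * d * P ≤ 8000 * h * m * P := by
            calc (s:ℝ) * d * P = (s * P) * d := by ring
              _ ≤ m * (8000 * P * h) := by gcongr
              _ = _ := by ring
          exact le_of_mul_le_mul_right this hP0
        have k2 : Real.exp 1 * g ≤ 3 * d := by
          apply mul_le_mul _ hg2r (by positivity) (by norm_num)
          linarith
        calc Real.exp 1 * g * (s * (3 * d)) * 2 = (Real.exp 1 * g) * (s * d) * 6 := by ring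
          _ ≤ (3 * d) * (8000 * h * m) * 6 := by gcongr
          _ = 144000 * d * (h * m) := by ring
          _ ≤ m * (h * m) := by gcongr; linarith
          _ = 1 * (h * m ^ 2) := by ring
  linarith

open Classical in
theorem round0' {V X : Type*} [Fintype V] [DecidableEq V] [DecidableEq X]
    (N : V → Finset V) (hN : ∀ x y, x ∈ N y → y ∈ N x)
    (d : ℕ) (hd : ∀ w, (N w).card ≤ d) (hd1 : 1 ≤ d)
    (U : Finset V) (Tg : V → X → Finset V)
    (hTg : ∀ u c, Tg u c ⊆ N u) (A0 : Finset V) (Γ : V → Finset V) (hΓ : ∀ w ∈ A0, Γ w ⊆ N w)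
    (hΓ2 : ∀ w ∈ A0, d ≤ 4 * (Γ w).card)
    {ι : Type*} [Fintype ι] [DecidableEq ι] [Nonempty ι] (S : ι → Finset X) (P h : ℕ) (P0 : Finset X)
    (hP : 0 < P) (hh : 0 < h) (h1 : 4000 * P * h ≤ d) (h2 : d ≤ 8000 * P * h)
    (hm1 : 150000 * d ≤ P0.card) (hm2 : P0.card ≤ 300000 * d)
    (hs1 : ∀ i, (S i ∩ P0).card * P ≤ P0.card) (hs2 : ∀ i, P0.card ≤ 2 * (S i ∩ P0).card * P)
    (hbig : 8 * (d ^ 6 * Fintype.card ι) ≤ 2 ^ h) :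
    ∃ f : V → X, (∀ u, f u ∈ P0) ∧ ∀ w ∈ A0, ∀ i, h ≤
      ((Γ w).filter fun u => f u ∈ S i ∧ ¬ bad N U Tg f u ∧ ¬ coll N U f w u).card := by
  have hP0 : 0 < P0.card := by omega
  have hne : Nonempty P0 := by
    obtain ⟨x, hx⟩ := Finset.card_pos.1 hP0
    exact ⟨⟨x, hx⟩⟩
  let S' : ι → Finset P0 := fun i => Finset.univ.filter fun x => (x : X) ∈ S i
  have hS' : ∀ i, (S' i).card = (S i ∩ P0).card := by
    intro i
    apply Finset.card_bij (fun (x : P0) _ => (x : X))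
    · intro x hx
      exact Finset.mem_inter.2 ⟨(Finset.mem_filter.1 hx).2, x.2⟩
    · intro x _ y _ h; exact Subtype.ext h
    · intro x hx
      obtain ⟨a, b⟩ := Finset.mem_inter.1 hx
      exact ⟨⟨x, b⟩, Finset.mem_filter.2 ⟨Finset.mem_univ _, a⟩, rfl⟩
  have num : ∀ w ∈ A0, ∀ i, _ := fun w hw i => round0_num d P h P0.card (S i ∩ P0).card (Γ w).card
    hP hh h1 h2 hm1 hm2 (hs1 i) (hs2 i) (hΓ2 w hw) ((Finset.card_le_card (hΓ w hw)).trans (hd w))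
  have hbr : 8 * ((d:ℝ) ^ 6 * Fintype.card ι) ≤ 2 ^ h := by exact_mod_cast hbig
  have hι : (1:ℝ) ≤ Fintype.card ι := by exact_mod_cast Fintype.card_pos
  have hdr : (1:ℝ) ≤ (d:ℝ) ^ 6 := one_le_pow₀ (by exact_mod_cast hd1)
  have h2h : (0:ℝ) < 2 ^ h := by positivity
  have hfin : 4 * (2 * ((1:ℝ) / 2) ^ h) * ((d:ℝ) ^ 6 * Fintype.card ι) ≤ 1 := by
    rw [one_div, inv_pow]
    calc 4 * (2 * ((2:ℝ) ^ h)⁻¹) * ((d:ℝ) ^ 6 * Fintype.card ι)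
        = (8 * ((d:ℝ) ^ 6 * Fintype.card ι)) * ((2:ℝ) ^ h)⁻¹ := by ring
      _ ≤ 2 ^ h * ((2:ℝ) ^ h)⁻¹ := by gcongr
      _ = 1 := mul_inv_cancel₀ h2h.ne'
  obtain ⟨f, hf⟩ := round0 (Y := P0) N hN d hd U d (fun b => (Finset.card_le_card Finset.inter_subset_left).trans (hd b))
    (fun u c => Tg u c) (fun u c => hTg u c) A0 Γ hΓ S' (fun _ => 2 * h) h
    (by intro w hw i; rw [hS']; exact (num w hw i).1) (2 * (1 / 2) ^ h) (by positivity) (by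
      refine le_trans (le_mul_of_one_le_right (by positivity) ?_) hfin
      nlinarith) (by
      intro w hw i
      rw [hS', Fintype.card_coe]
      exact (num w hw i).2) (by
      push_cast
      exact hfin)
  refine ⟨fun v => f v, fun u => (f u).2, fun w hw i => ?_⟩
  have h3 := hf w hw i
  have h4 : ((Γ w).filter fun u => f u ∈ S' i ∧ ¬ bad N U (fun u (c : P0) => Tg u c) f u ∧ ¬ coll N U f w u).card ≤
    ((Γ w).filter fun u => (f u : X) ∈ S i ∧ ¬ bad N U Tg (fun v => (f v : X)) u ∧
      ¬ coll N U (fun v => (f v : X)) w u).card := by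
    apply Finset.card_le_card
    intro u hu
    obtain ⟨a, b, c, e⟩ := Finset.mem_filter.1 hu
    refine Finset.mem_filter.2 ⟨a, (Finset.mem_filter.1 b).2, fun hb => c ?_, fun hc => e ?_⟩
    · exact (bad_comp (Subtype.val) Subtype.val_injective N U Tg f u).1 hb
    · exact (coll_comp (Subtype.val) Subtype.val_injective N U f w u).1 hc
  have h5 : h ≤ _ := le_trans (by beta_reduce at h3; omega) h4
  exact h5

theorem not_bad_half {V X : Type*} [DecidableEq V] (N : V → Finset V) (U : Finset V)
    (Tg : V → X → Finset V) (f : V → X) (u : V) (T : Finset V) (hT : T = Tg u (f u)) (hb : ¬ bad N U Tg f u)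
    (Q : V → Prop) [DecidablePred Q] (hQ : ∀ b ∈ T, ¬ coll N U f b u → Q b) :
    T.card ≤ 2 * (T.filter Q).card := by
  classical
  subst hT
  unfold bad at hb
  have h1 := Finset.card_filter_add_card_filter_not (s := Tg u (f u)) (fun b => coll N U f b u)
  have h2 : ((Tg u (f u)).filter fun b => ¬ coll N U f b u).card ≤ ((Tg u (f u)).filter Q).card := by
    apply Finset.card_le_card
    intro b hb
    obtain ⟨h1, h2⟩ := Finset.mem_filter.1 hb
    exact Finset.mem_filter.2 ⟨h1, hQ b h1 h2⟩
  omega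

theorem assembly : ∃ d0 : ℕ, ∀ d : ℕ, d0 ≤ d → 1 ≤ d → ∀ (V X : Type) [Fintype V] [DecidableEq V]
    [Fintype X] [DecidableEq X]
    (N : V → Finset V), (∀ x y, x ∈ N y → y ∈ N x) → (∀ w, (N w).card ≤ d) → (∀ w, d ≤ 2 * (N w).card) →
    ∀ A : Finset V, (∀ x y, x ∈ N y → (x ∈ A ↔ y ∉ A)) →
    ∀ R : X → X → Prop, (∀ x y, R x y → R y x) → ∀ P0 P1 : Finset X, Disjoint P0 P1 →
    ∀ P h : ℕ, 0 < P → 0 < h → 4000 * P * h ≤ d → d ≤ 8000 * P * h →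
    150000 * d ≤ P0.card → P0.card ≤ 300000 * d → (2 * 3 ^ 33 + 60) * d ≤ P1.card →
    (∀ S : X → Finset X, (∀ y x, x ∈ S y ↔ R x y) →
      ∀ y, (S y ∩ P0).card * P ≤ P0.card ∧ P0.card ≤ 2 * (S y ∩ P0).card * P) →
    8 * (d ^ 6 * Fintype.card X) ≤ 2 ^ h →
    ∃ (χ : V → X) (H : V → V → Prop), (∀ u v, H u v → H v u) ∧ (∀ u v, H u v → v ∈ N u ∧ R (χ u) (χ v)) ∧
      (∀ u v v', H u v → H u v' → χ v = χ v' → v = v') ∧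
      ∀ u, ∃ T : Finset V, (∀ v ∈ T, H u v) ∧ h ≤ 2 * T.card := by
  classical
  obtain ⟨d0, hd0⟩ := leftover
  refine ⟨d0, ?_⟩
  intro d hd hd1 V X _ _ _ _ N hN hNd hNd2 A hA R hR P0 P1 hdis P h hP hh h1 h2 hm1 hm2 hP1 hS hbig
  let S : X → Finset X := fun y => Finset.univ.filter fun x => R x y
  have hSR : ∀ y x, x ∈ S y ↔ R x y := by intro y x; simp [S]
  have hS := hS S hSR
  have hXne : Nonempty X := by
    obtain ⟨x, hx⟩ := Finset.card_pos.1 (show 0 < P0.card by omega)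
    exact ⟨x⟩
  let B : Finset V := Finset.univ.filter fun v => v ∉ A
  have hB : ∀ v, v ∈ B ↔ v ∉ A := by intro v; simp [B]
  obtain ⟨fB, hfB0, hfB⟩ := round0' N hN d hNd hd1 B (fun b _ => N b) (fun _ _ => subset_rfl) A N
    (fun _ _ => subset_rfl) (fun w _ => by have := hNd2 w; omega) S P h P0 hP hh h1 h2 hm1 hm2
    (fun y => (hS y).1) (fun y => (hS y).2) hbig
  set badB : V → Prop := bad N B (fun b (_ : X) => N b) fB with hbadB
  let NY : V → X → Finset V := fun a y =>
    (N a).filter fun u => fB u ∈ S y ∧ ¬ badB u ∧ ¬ coll N B fB a u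
  have hNY : ∀ a ∈ A, ∀ y, h ≤ (NY a y).card := hfB
  let Γ : V → Finset V := fun b => (N b).filter fun a => badB b ∨ ¬ coll N B fB a b
  have hΓ : ∀ b, d ≤ 4 * (Γ b).card := by
    intro b
    have hb2 := hNd2 b
    by_cases hb : badB b
    · have : Γ b = N b := by
        apply Finset.filter_true_of_mem
        intro a _; exact Or.inl hb
      rw [this]; omega
    · have := not_bad_half N B (fun b (_ : X) => N b) fB b (N b) rfl hb
        (fun a => badB b ∨ ¬ coll N B fB a b) (fun a _ ha => Or.inr ha)
      have : (N b).card ≤ 2 * (Γ b).card := this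
      omega
  obtain ⟨fA, hfA0, hfA⟩ := round0' N hN d hNd hd1 A NY (fun _ _ => Finset.filter_subset _ _) B Γ
    (fun _ _ => Finset.filter_subset _ _) (fun w _ => hΓ w) S P h P0 hP hh h1 h2 hm1 hm2
    (fun y => (hS y).1) (fun y => (hS y).2) hbig
  set badA : V → Prop := bad N A NY fA with hbadA
  let MY : V → X → Finset V := fun b y =>
    (Γ b).filter fun u => fA u ∈ S y ∧ ¬ badA u ∧ ¬ coll N A fA b u
  have hMY : ∀ b ∈ B, ∀ y, h ≤ (MY b y).card := hfA
  let UA := A.filter badA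
  let UB := B.filter badB
  obtain ⟨gA, hgA1, hgA2⟩ := hd0 d hd V X N hN hNd NY (fun _ _ => Finset.filter_subset _ _) UA P1 hP1
  obtain ⟨gB, hgB1, hgB2⟩ := hd0 d hd V X N hN hNd MY
    (fun _ _ => (Finset.filter_subset _ _).trans (Finset.filter_subset _ _)) UB P1 hP1
  let χ : V → X := fun v => if v ∈ A then (if badA v then gA v else fA v) else (if badB v then gB v else fB v)
  have χ1 : ∀ v ∈ A, badA v → χ v = gA v := by intro v h1 h2; simp [χ, h1, h2]
  have χ2 : ∀ v ∈ A, ¬ badA v → χ v = fA v := by intro v h1 h2; simp [χ, h1, h2]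
  have χ3 : ∀ v, v ∉ A → badB v → χ v = gB v := by intro v h1 h2; simp [χ, h1, h2]
  have χ4 : ∀ v, v ∉ A → ¬ badB v → χ v = fB v := by intro v h1 h2; simp [χ, h1, h2]
  let E : V → V → Prop := fun a b => b ∈ N a ∧ R (χ a) (χ b) ∧
    ((¬ badA a ∧ ¬ coll N A fA b a) ∨ (badA a ∧ ¬ coll N UA gA b a)) ∧
    ((¬ badB b ∧ ¬ coll N B fB a b) ∨ (badB b ∧ ¬ coll N UB gB a b))
  have hEA : ∀ a b b', a ∈ A → b ∉ A → b' ∉ A → E a b → E a b' → χ b = χ b' → b = b' := by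
    rintro a b b' ha hb hb' ⟨hn, -, -, h⟩ ⟨hn', -, -, h'⟩ heq
    by_contra hne
    rcases h with ⟨hb1, hb2⟩ | ⟨hb1, hb2⟩ <;> rcases h' with ⟨hb1', hb2'⟩ | ⟨hb1', hb2'⟩
    · rw [χ4 b hb hb1, χ4 b' hb' hb1'] at heq
      exact hb2 ⟨b', Finset.mem_inter.2 ⟨hn', (hB _).2 hb'⟩, Ne.symm hne, heq.symm⟩
    · rw [χ4 b hb hb1, χ3 b' hb' hb1'] at heq
      exact Finset.disjoint_left.1 hdis (hfB0 b) (heq ▸ hgB1 b' (Finset.mem_filter.2 ⟨(hB _).2 hb', hb1'⟩))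
    · rw [χ3 b hb hb1, χ4 b' hb' hb1'] at heq
      exact Finset.disjoint_left.1 hdis (hfB0 b') (heq ▸ hgB1 b (Finset.mem_filter.2 ⟨(hB _).2 hb, hb1⟩))
    · rw [χ3 b hb hb1, χ3 b' hb' hb1'] at heq
      exact hb2 ⟨b', Finset.mem_inter.2 ⟨hn', Finset.mem_filter.2 ⟨(hB _).2 hb', hb1'⟩⟩, Ne.symm hne, heq.symm⟩
  have hEB : ∀ b a a', b ∉ A → a ∈ A → a' ∈ A → E a b → E a' b → χ a = χ a' → a = a' := by
    rintro b a a' hb ha ha' ⟨hn, -, h, -⟩ ⟨hn', -, h', -⟩ heq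
    by_contra hne
    rcases h with ⟨hb1, hb2⟩ | ⟨hb1, hb2⟩ <;> rcases h' with ⟨hb1', hb2'⟩ | ⟨hb1', hb2'⟩
    · rw [χ2 a ha hb1, χ2 a' ha' hb1'] at heq
      exact hb2 ⟨a', Finset.mem_inter.2 ⟨hN _ _ hn', ha'⟩, Ne.symm hne, heq.symm⟩
    · rw [χ2 a ha hb1, χ1 a' ha' hb1'] at heq
      exact Finset.disjoint_left.1 hdis (hfA0 a) (heq ▸ hgA1 a' (Finset.mem_filter.2 ⟨ha', hb1'⟩))
    · rw [χ1 a ha hb1, χ2 a' ha' hb1'] at heq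
      exact Finset.disjoint_left.1 hdis (hfA0 a') (heq ▸ hgA1 a (Finset.mem_filter.2 ⟨ha, hb1⟩))
    · rw [χ1 a ha hb1, χ1 a' ha' hb1'] at heq
      exact hb2 ⟨a', Finset.mem_inter.2 ⟨hN _ _ hn', Finset.mem_filter.2 ⟨ha', hb1'⟩⟩, Ne.symm hne, heq.symm⟩
  refine ⟨χ, fun u v => (u ∈ A ∧ v ∉ A ∧ E u v) ∨ (v ∈ A ∧ u ∉ A ∧ E v u), ?_, ?_, ?_, ?_⟩
  · rintro u v (h | h)
    · exact Or.inr h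
    · exact Or.inl h
  · rintro u v (⟨-, -, h⟩ | ⟨-, -, h⟩)
    · exact ⟨h.1, h.2.1⟩
    · exact ⟨hN _ _ h.1, hR _ _ h.2.1⟩
  · rintro u v v' (⟨hu, hv, h⟩ | ⟨hv, hu, h⟩) (⟨hu', hv', h'⟩ | ⟨hv', hu', h'⟩) heq
    · exact hEA u v v' hu hv hv' h h' heq
    · exact absurd hu hu'
    · exact absurd hu' hu
    · exact hEB u v v' hu hv hv' h h' heq
  · intro u
    by_cases hu : u ∈ A
    · suffices ∃ T : Finset V, (∀ v ∈ T, v ∉ A ∧ E u v) ∧ h ≤ 2 * T.card by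
        obtain ⟨T, hT1, hT2⟩ := this
        exact ⟨T, fun v hv => Or.inl ⟨hu, hT1 v hv⟩, hT2⟩
      have hNYA : ∀ y, ∀ b ∈ NY u y, b ∉ A ∧ b ∈ N u ∧ R (fB b) y ∧ ¬ badB b ∧ ¬ coll N B fB u b := by
        intro y b hb
        obtain ⟨p1, p2, p3, p4⟩ := Finset.mem_filter.1 hb
        refine ⟨fun hbA => ?_, p1, (hSR _ _).1 p2, p3, p4⟩
        exact (hA b u p1).1 hbA hu
      by_cases hb : badA u
      · refine ⟨(NY u (gA u)).filter fun b => ¬ coll N UA gA b u, ?_, ?_⟩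
        · intro b hbm
          obtain ⟨q1, q2⟩ := Finset.mem_filter.1 hbm
          obtain ⟨p0, p1, p2, p3, p4⟩ := hNYA _ b q1
          refine ⟨p0, p1, ?_, Or.inr ⟨hb, q2⟩, Or.inl ⟨p3, p4⟩⟩
          rw [χ1 u hu hb, χ4 b p0 p3]
          exact hR _ _ p2
        · exact (hNY u hu (gA u)).trans (not_bad_half N UA NY gA u _ rfl
            (hgA2 u (Finset.mem_filter.2 ⟨hu, hb⟩)) _ (fun b _ hc => hc))
      · refine ⟨(NY u (fA u)).filter fun b => ¬ coll N A fA b u, ?_, ?_⟩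
        · intro b hbm
          obtain ⟨q1, q2⟩ := Finset.mem_filter.1 hbm
          obtain ⟨p0, p1, p2, p3, p4⟩ := hNYA _ b q1
          refine ⟨p0, p1, ?_, Or.inl ⟨hb, q2⟩, Or.inl ⟨p3, p4⟩⟩
          rw [χ2 u hu hb, χ4 b p0 p3]
          exact hR _ _ p2
        · exact (hNY u hu (fA u)).trans (not_bad_half N A NY fA u _ rfl
            hb _ (fun b _ hc => hc))
    · suffices ∃ T : Finset V, (∀ v ∈ T, v ∈ A ∧ E v u) ∧ h ≤ 2 * T.card by
        obtain ⟨T, hT1, hT2⟩ := this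
        exact ⟨T, fun v hv => Or.inr ⟨(hT1 v hv).1, hu, (hT1 v hv).2⟩, hT2⟩
      have huB := (hB u).2 hu
      have hMYA : ∀ y, ∀ a ∈ MY u y, a ∈ A ∧ u ∈ N a ∧ R (fA a) y ∧ ¬ badA a ∧ ¬ coll N A fA u a ∧
          (badB u ∨ ¬ coll N B fB a u) := by
        intro y a ha
        obtain ⟨p1, p2, p3, p4⟩ := Finset.mem_filter.1 ha
        obtain ⟨p5, p6⟩ := Finset.mem_filter.1 p1
        exact ⟨(hA a u p5).2 hu, hN _ _ p5, (hSR _ _).1 p2, p3, p4, p6⟩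
      by_cases hb : badB u
      · refine ⟨(MY u (gB u)).filter fun a => ¬ coll N UB gB a u, ?_, ?_⟩
        · intro a ham
          obtain ⟨q1, q2⟩ := Finset.mem_filter.1 ham
          obtain ⟨p0, p1, p2, p3, p4, p5⟩ := hMYA _ a q1
          refine ⟨p0, p1, ?_, Or.inl ⟨p3, p4⟩, Or.inr ⟨hb, q2⟩⟩
          rw [χ2 a p0 p3, χ3 u hu hb]
          exact p2
        · exact (hMY u huB (gB u)).trans (not_bad_half N UB MY gB u _ rfl
            (hgB2 u (Finset.mem_filter.2 ⟨huB, hb⟩)) _ (fun b _ hc => hc))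
      · refine ⟨MY u (fB u), ?_, ?_⟩
        · intro a ham
          obtain ⟨p0, p1, p2, p3, p4, p5⟩ := hMYA _ a ham
          refine ⟨p0, p1, ?_, Or.inl ⟨p3, p4⟩, Or.inl ⟨hb, p5.resolve_left hb⟩⟩
          rw [χ2 a p0 p3, χ4 u hu hb]
          exact p2
        · have := hMY u huB (fB u)
          omega
end KRS

namespace KRS
open MvPolynomial

noncomputable def ff {K I J : Type} [Field K] [Fintype I] (α : J → I → K) (j : J) : MvPolynomial I K :=
  ∏ i, (X i - C (α j i))

theorem val_step {K I J L : Type} [Field K] [Field L] [Fintype I] [Fintype J] [DecidableEq I]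
    (hIJ : Fintype.card I ≤ Fintype.card J) (α : J → I → K) (hα : ∀ i, Function.Injective fun j => α j i)
    (c : K →+* L) (x : I → L) (V : ValuationSubring L) (hc : ∀ k, c k ∈ V)
    (hf : ∀ j, ∏ i, (x i - c (α j i)) ∈ V) (i0 : I) : x i0 ∈ V := by
  by_contra hx
  have hle : ∀ y, V.valuation y ≤ 1 ↔ y ∈ V := V.valuation_le_one_iff
  have hx1 : 1 < V.valuation (x i0) := by
    rw [← not_le, hle]; exact hx
  have key : ∀ j, ∃ i : {i // i ≠ i0}, V.valuation (x i - c (α j i)) < 1 := by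
    intro j
    by_contra hcon
    push Not at hcon
    have h1 := (hle _).2 (hf j)
    rw [map_prod, ← Finset.mul_prod_erase _ _ (Finset.mem_univ i0)] at h1
    have h2 : 1 < V.valuation (x i0 - c (α j i0)) := by
      rw [← not_le, hle]
      intro h
      exact hx (by simpa using V.add_mem _ _ h (hc (α j i0)))
    have h3 : 1 ≤ ∏ i ∈ Finset.univ.erase i0, V.valuation (x i - c (α j i)) := by
      apply Finset.one_le_prod'
      intro i hi
      exact hcon ⟨i, Finset.ne_of_mem_erase hi⟩
    exact absurd h1 (not_le.2 (lt_of_lt_of_le h2 (le_mul_of_one_le_right' h3)))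
  choose g hg using key
  obtain ⟨j, j', hne, hgj⟩ := Fintype.exists_ne_map_eq_of_card_lt g (by
    rw [Fintype.card_subtype_compl, Fintype.card_subtype_eq]
    have : 0 < Fintype.card I := Fintype.card_pos_iff.2 ⟨i0⟩
    omega)
  have h1 := hg j
  have h2 := hg j'
  rw [← hgj] at h2
  have h3 := V.valuation.map_sub_lt h1 h2
  have h4 : α j' (g j) - α j (g j) ≠ 0 := sub_ne_zero.2 fun h => hne (hα _ h).symm
  have h5 : (x (g j) - c (α j (g j))) - (x (g j) - c (α j' (g j))) = c (α j' (g j) - α j (g j)) := by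
    rw [map_sub]; ring
  rw [h5] at h3
  have h6 := (hle _).2 (hc (α j' (g j) - α j (g j))⁻¹)
  have h7 : V.valuation (c (α j' (g j) - α j (g j))) * V.valuation (c (α j' (g j) - α j (g j))⁻¹) = 1 := by
    rw [← map_mul, ← map_mul, mul_inv_cancel₀ h4, map_one, map_one]
  exact absurd h7 (ne_of_lt (lt_of_le_of_lt (mul_le_of_le_one_right' h6) h3))

theorem int_X {K I J : Type} [Field K] [Fintype I] [Fintype J] [DecidableEq I]
    (hIJ : Fintype.card I ≤ Fintype.card J) (α : J → I → K) (hα : ∀ i, Function.Injective fun j => α j i)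
    (i0 : I) : (aeval (R := K) (ff α)).toRingHom.IsIntegralElem (X i0) := by
  let S := MvPolynomial I K
  let L := FractionRing S
  let φ := (aeval (R := K) (ff α)).toRingHom
  let ι : S →+* L := algebraMap S L
  let s : Set L := Set.range (fun k => ι (C k)) ∪ Set.range (fun j => ι (ff α j))
  have h := iInf_valuationSubring_superset (s := s)
  have hx : ι (X i0) ∈ (⨅ V : {V : ValuationSubring L // s ⊆ V.toSubring}, V.1.toSubring) := by
    rw [Subring.mem_iInf]
    rintro ⟨V, hV⟩
    refine val_step hIJ α hα (ι.comp C) (fun i => ι (X i)) V ?_ ?_ i0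
    · intro k; exact hV (Or.inl ⟨k, rfl⟩)
    · intro j
      have := hV (Or.inr ⟨j, rfl⟩)
      simpa [ff, map_prod] using this
  rw [h] at hx
  have hx' : IsIntegral (Subring.closure s) (ι (X i0)) := hx
  obtain ⟨p, hp, hp0⟩ := hx'
  have hcl : Subring.closure s ≤ (ι.comp φ).range := by
    rw [Subring.closure_le]
    rintro _ (⟨k, rfl⟩ | ⟨j, rfl⟩)
    · exact ⟨C k, by simp [φ, MvPolynomial.algebraMap_eq]⟩
    · exact ⟨X j, by simp [φ]⟩
  have hl : p.map (algebraMap (Subring.closure s) L) ∈ Polynomial.lifts (ι.comp φ) := by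
    rw [Polynomial.lifts_iff_coeff_lifts]
    intro n
    rw [Polynomial.coeff_map]
    exact hcl (p.coeff n).2
  obtain ⟨q, hq, -, hqm⟩ := Polynomial.lifts_and_natDegree_eq_and_monic hl (hp.map _)
  refine ⟨q, hqm, ?_⟩
  apply IsFractionRing.injective S L
  rw [map_zero, Polynomial.hom_eval₂, ← Polynomial.eval_map]
  change Polynomial.eval (ι (X i0)) (Polynomial.map (ι.comp φ) q) = 0
  rw [hq, Polynomial.eval_map]
  exact hp0
end KRS

namespace KRS
open MvPolynomial

theorem int_all {K I J : Type} [Field K] [Fintype I] [Fintype J] [DecidableEq I]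
    (hIJ : Fintype.card I ≤ Fintype.card J) (α : J → I → K) (hα : ∀ i, Function.Injective fun j => α j i) :
    (aeval (R := K) (ff α)).toRingHom.IsIntegral := by
  intro p
  induction p using MvPolynomial.induction_on with
  | C a =>
    have h : C a = (aeval (R := K) (ff α)).toRingHom (C a) := by simp [MvPolynomial.algebraMap_eq]
    rw [h]; exact RingHom.isIntegralElem_map _
  | add p q hp hq => exact RingHom.IsIntegralElem.add _ hp hq
  | mul_X p i hp => exact RingHom.IsIntegralElem.mul _ hp (int_X hIJ α hα i)

theorem inj_phi {K I J : Type} [Field K] [Fintype I] [Fintype J] [DecidableEq I]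
    (hIJ : Fintype.card I = Fintype.card J) (α : J → I → K) (hα : ∀ i, Function.Injective fun j => α j i) :
    Function.Injective (aeval (R := K) (ff α)) := by
  have halg : Algebra.IsAlgebraic (Algebra.adjoin K (Set.range (ff α))) (MvPolynomial I K) := by
    have : Algebra.IsIntegral (Algebra.adjoin K (Set.range (ff α))) (MvPolynomial I K) := by
      constructor
      intro p
      obtain ⟨q, hq, hq0⟩ := int_all hIJ.le α hα p
      have hm : ∀ r : MvPolynomial J K, aeval (R := K) (ff α) r ∈ Algebra.adjoin K (Set.range (ff α)) := by
        intro r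
        rw [Algebra.adjoin_range_eq_range_aeval]
        exact ⟨r, rfl⟩
      let ψ : MvPolynomial J K →+* Algebra.adjoin K (Set.range (ff α)) :=
        ((aeval (R := K) (ff α)).codRestrict _ hm).toRingHom
      refine ⟨q.map ψ, hq.map _, ?_⟩
      rw [Polynomial.eval₂_map]
      exact hq0
    infer_instance
  have h := Algebra.IsAlgebraic.isTranscendenceBasis_of_le_trdeg_of_finite K (ff α) (by
    rw [MvPolynomial.trdeg_of_isDomain, Cardinal.lift_id, Cardinal.mk_fintype, Cardinal.mk_fintype, hIJ])
  exact h.1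

def Sp (K : Type) {S : Type} [Field K] [CommRing S] [Algebra K S] (J : Ideal S) (n : ℕ) : Prop :=
  ∃ T : Finset S, T.card ≤ n ∧ ∀ p, ∃ q ∈ Submodule.span K (T : Set S), p - q ∈ J

theorem Sp_mono {K S : Type} [Field K] [CommRing S] [Algebra K S] {J J' : Ideal S} (h : J ≤ J') {n : ℕ}
    (hs : Sp K J n) : Sp K J' n := by
  obtain ⟨T, h1, h2⟩ := hs
  exact ⟨T, h1, fun p => let ⟨q, a, b⟩ := h2 p; ⟨q, a, h b⟩⟩

theorem prod_sp {K S ι : Type} [Field K] [CommRing S] [Algebra K S] [DecidableEq ι] (u : ι → S) (n : ℕ)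
    (A : Finset ι) : ∀ J : Ideal S, ∏ i ∈ A, u i ∈ J → (∀ i ∈ A, Sp K (J ⊔ Ideal.span {u i}) n) →
      Sp K J (A.card * n) := by
  classical
  induction A using Finset.induction_on with
  | empty =>
    intro J h _
    rw [Finset.prod_empty] at h
    refine ⟨∅, by simp, fun p => ⟨0, Submodule.zero_mem _, ?_⟩⟩
    rw [(Ideal.eq_top_iff_one J).2 h]; trivial
  | insert i A hi ih =>
    intro J h hs
    let J' : Ideal S := Submodule.comap (LinearMap.mulLeft S (u i)) J
    have hJ' : ∀ x, x ∈ J' ↔ u i * x ∈ J := fun x => Iff.rfl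
    have hJJ : J ≤ J' := fun x hx => (hJ' x).2 (J.mul_mem_left _ hx)
    obtain ⟨T', h1, h2⟩ := ih J' ((hJ' _).2 (by rwa [Finset.prod_insert hi] at h)) (fun k hk =>
      Sp_mono (sup_le_sup_right hJJ _) (hs k (Finset.mem_insert_of_mem hk)))
    obtain ⟨T, h3, h4⟩ := hs i (Finset.mem_insert_self _ _)
    refine ⟨T ∪ T'.image (fun x => u i * x), ?_, ?_⟩
    · rw [Finset.card_insert_of_notMem hi]
      have := Finset.card_union_le T (T'.image (fun x => u i * x))
      have := Finset.card_image_le (s := T') (f := fun x => u i * x)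
      nlinarith
    · intro p
      obtain ⟨q, hq, hpq⟩ := h4 p
      obtain ⟨a, ha, b, hb, hab⟩ := Submodule.mem_sup.1 hpq
      obtain ⟨s, rfl⟩ := Ideal.mem_span_singleton'.1 hb
      obtain ⟨q', hq', hsq⟩ := h2 s
      refine ⟨q + u i * q', ?_, ?_⟩
      · apply Submodule.add_mem
        · exact Submodule.span_mono (by simp) hq
        · have : u i * q' ∈ (Submodule.span K (T' : Set S)).map (LinearMap.mulLeft K (u i)) :=
            ⟨q', hq', rfl⟩
          rw [Submodule.map_span] at this
          refine Submodule.span_mono ?_ this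
          rintro _ ⟨y, hy, rfl⟩
          simp only [Finset.coe_union, Finset.coe_image]
          exact Or.inr ⟨y, hy, rfl⟩
      · have e : p - (q + u i * q') = a + u i * (s - q') := by
          linear_combination -hab
        rw [e]
        exact J.add_mem ha hsq

theorem sp_main {K I J : Type} [Field K] [DecidableEq I] [DecidableEq J] (α : J → I → K)
    (hα : ∀ i, Function.Injective fun j => α j i) (k : ℕ) : ∀ (A : Finset I) (B : Finset J),
    A.card = k → B.card = k → ∀ Q : Ideal (MvPolynomial I K),
    (∀ j ∈ B, ∏ i ∈ A, (X i - C (α j i)) ∈ Q) → (∀ i ∉ A, ∃ c, X i - C c ∈ Q) → Sp K Q k.factorial := by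
  induction k with
  | zero =>
    intro A B hA hB Q _ h
    rw [Finset.card_eq_zero] at hA
    subst hA
    choose c hc using fun i => h i (Finset.notMem_empty i)
    refine ⟨{1}, by simp, fun p => ⟨C (eval c p), ?_, ?_⟩⟩
    · have : C (eval c p) = (eval c p) • (1 : MvPolynomial I K) := by
        rw [MvPolynomial.smul_eq_C_mul, mul_one]
      rw [this]
      exact Submodule.smul_mem _ _ (Submodule.subset_span (by simp))
    · induction p using MvPolynomial.induction_on with
      | C a => simp
      | add p q hp hq =>
        have : p + q - C (eval c (p+q)) = (p - C (eval c p)) + (q - C (eval c q)) := by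
          rw [map_add, map_add]; ring
        rw [this]; exact Q.add_mem hp hq
      | mul_X p i hp =>
        have : p * X i - C (eval c (p * X i)) = X i * (p - C (eval c p)) + C (eval c p) * (X i - C (c i)) := by
          rw [map_mul, map_mul, eval_X]; ring
        rw [this]; exact Q.add_mem (Q.mul_mem_left _ hp) (Q.mul_mem_left _ (hc i))
  | succ k ih =>
    intro A B hA hB Q h1 h2
    obtain ⟨j0, hj0⟩ : B.Nonempty := Finset.card_pos.1 (by omega)
    rw [Nat.factorial_succ, ← hA]
    refine prod_sp (fun i => X i - C (α j0 i)) _ A Q (h1 j0 hj0) ?_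
    intro i hi
    refine ih (A.erase i) (B.erase j0) ?_ ?_ _ ?_ ?_
    · rw [Finset.card_erase_of_mem hi]; omega
    · rw [Finset.card_erase_of_mem hj0]; omega
    · intro j hj
      obtain ⟨hne, hjB⟩ := Finset.mem_erase.1 hj
      have e1 := Ideal.mem_sup_left (T := Ideal.span {X i - C (α j0 i)}) (h1 j hjB)
      have e2 := Ideal.mem_sup_right (S := Q) (Ideal.mem_span_singleton_self (X i - C (α j0 i)))
      rw [← Finset.mul_prod_erase _ _ hi] at e1
      set Pj := ∏ i ∈ A.erase i, (X i - C (α j i))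
      have hz : α j0 i - α j i ≠ 0 := sub_ne_zero.2 fun h => hne (hα i h).symm
      have e3 : Pj = C (α j0 i - α j i)⁻¹ * ((X i - C (α j i)) * Pj - Pj * (X i - C (α j0 i))) := by
        have : C (α j0 i - α j i)⁻¹ * C (α j0 i - α j i) = (1 : MvPolynomial I K) := by
          rw [← C_mul, inv_mul_cancel₀ hz, C_1]
        rw [C_sub] at this
        linear_combination -Pj * this
      rw [e3]
      exact Ideal.mul_mem_left _ _ (Ideal.sub_mem _ e1 (Ideal.mul_mem_left _ _ e2))
    · intro i' hi'
      by_cases hii : i' = i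
      · subst hii
        exact ⟨_, Ideal.mem_sup_right (Ideal.mem_span_singleton_self _)⟩
      · obtain ⟨c, hc⟩ := h2 i' (fun h => hi' (Finset.mem_erase.2 ⟨hii, h⟩))
        exact ⟨c, Ideal.mem_sup_left hc⟩

theorem separate {K I : Type} [Field K] [Infinite K] [Fintype I] (Z : Finset (I → K)) :
    ∃ l : I → K, Set.InjOn (fun x : I → K => ∑ i, l i * x i) Z := by
  classical
  let Q : MvPolynomial I K := ∏ z ∈ (Z ×ˢ Z).filter (fun z => z.1 ≠ z.2), ∑ i, C (z.1 i - z.2 i) * X i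
  have hQ : Q ≠ 0 := by
    apply Finset.prod_ne_zero_iff.2
    intro z hz h0
    apply (Finset.mem_filter.1 hz).2
    funext i
    have := congrArg (eval (Pi.single i 1)) h0
    simpa [Pi.single_apply, sub_eq_zero] using this
  obtain ⟨l, hl⟩ : ∃ l, eval l Q ≠ 0 := by
    by_contra h
    push Not at h
    exact hQ (MvPolynomial.funext (by simpa using h))
  refine ⟨l, fun x hx y hy hxy => ?_⟩
  by_contra hne
  rw [map_prod] at hl
  apply Finset.prod_ne_zero_iff.1 hl (x, y) (Finset.mem_filter.2 ⟨Finset.mem_product.2 ⟨hx, hy⟩, hne⟩)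
  have : ∑ i, l i * x i = ∑ i, l i * y i := hxy
  simp only [map_sum, map_mul, eval_C, eval_X, sub_mul, Finset.sum_sub_distrib]
  rw [sub_eq_zero]
  simpa [mul_comm] using this
end KRS

namespace KRS
open MvPolynomial

theorem krs_algebra {K I J : Type} [Field K] [Infinite K] [Fintype I] [Fintype J] [DecidableEq I] [DecidableEq J]
    (hIJ : Fintype.card I = Fintype.card J) (α : J → I → K) (hα : ∀ i, Function.Injective fun j => α j i)
    (β : J → K) (Z : Finset (I → K)) (hZ : ∀ x ∈ Z, ∀ j, ∏ i, (x i - α j i) = β j) :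
    Z.card ≤ (Fintype.card I).factorial := by
  classical
  set n := (Fintype.card I).factorial with hn
  obtain ⟨l, hl⟩ := separate Z
  let φ := aeval (R := K) (ff α)
  let alg : Algebra (MvPolynomial J K) (MvPolynomial I K) := φ.toRingHom.toAlgebra
  have hmap : ∀ r : MvPolynomial J K, algebraMap (MvPolynomial J K) (MvPolynomial I K) r = φ r := fun r => rfl
  have hinj : Function.Injective (algebraMap (MvPolynomial J K) (MvPolynomial I K)) := inj_phi hIJ α hα
  have tower : IsScalarTower K (MvPolynomial J K) (MvPolynomial I K) :=
    IsScalarTower.of_algebraMap_eq fun k => by rw [hmap]; exact (φ.commutes k).symm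
  have fs : FaithfulSMul (MvPolynomial J K) (MvPolynomial I K) :=
    (faithfulSMul_iff_algebraMap_injective _ _).2 hinj
  have tf : Module.IsTorsionFree (MvPolynomial J K) (MvPolynomial I K) := inferInstance
  have hint : Algebra.IsIntegral (MvPolynomial J K) (MvPolynomial I K) := ⟨int_all hIJ.le α hα⟩
  have hft : Algebra.FiniteType (MvPolynomial J K) (MvPolynomial I K) :=
    Algebra.FiniteType.of_restrictScalars_finiteType K _ _
  have hfin : Module.Finite (MvPolynomial J K) (MvPolynomial I K) := Algebra.IsIntegral.finite
  obtain ⟨T, hT, hTs⟩ := sp_main α hα (Fintype.card I) Finset.univ Finset.univ rfl hIJ.symm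
    (Ideal.span (Set.range (ff α))) (fun j _ => Ideal.subset_span ⟨j, rfl⟩)
    (fun i hi => absurd (Finset.mem_univ i) hi)
  let Iv : Ideal (MvPolynomial J K) := Ideal.span (Set.range X)
  have hsup : (⊤ : Submodule (MvPolynomial J K) (MvPolynomial I K)) ≤
      Submodule.span (MvPolynomial J K) (T : Set (MvPolynomial I K)) ⊔ Iv • ⊤ := by
    intro p _
    obtain ⟨q, hq, hpq⟩ := hTs p
    have e : p = q + (p - q) := by ring
    rw [e]
    refine Submodule.add_mem_sup ?_ ?_
    · exact Submodule.span_le_restrictScalars K (MvPolynomial J K) _ hq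
    · refine Submodule.span_induction ?_ ?_ ?_ ?_ hpq
      · rintro _ ⟨j, rfl⟩
        have : ff α j = (X j : MvPolynomial J K) • (1 : MvPolynomial I K) := by
          rw [Algebra.smul_def, hmap, mul_one]; simp [φ]
        rw [this]
        exact Submodule.smul_mem_smul (Ideal.subset_span ⟨j, rfl⟩) trivial
      · exact Submodule.zero_mem _
      · intro x y _ _ hx hy; exact Submodule.add_mem _ hx hy
      · intro a x _ hx
        refine Submodule.smul_induction_on hx ?_ ?_
        · intro r hr m _
          rw [smul_comm]
          exact Submodule.smul_mem_smul hr trivial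
        · intro x y hx hy
          rw [smul_add]; exact Submodule.add_mem _ hx hy
  obtain ⟨r, hr1, hr2⟩ := Submodule.exists_sub_one_mem_and_smul_le_of_fg_of_le_sup
    hfin.fg_top le_rfl hsup
  have hr0 : r ≠ 0 := by
    rintro rfl
    have hker : Iv ≤ RingHom.ker (constantCoeff (R := K) (σ := J)) := by
      rw [Ideal.span_le]
      rintro _ ⟨j, rfl⟩
      simp [RingHom.mem_ker]
    have := hker hr1
    simp [RingHom.mem_ker] at this
  let h : MvPolynomial I K := ∑ i, C (l i) * X i
  have hdep : ¬ LinearIndependent (MvPolynomial J K) (fun i : Fin (n+1) => r • h ^ (i:ℕ)) := by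
    intro hli
    have := linearIndependent_le_span' _ hli (T : Set (MvPolynomial I K)) (by
      rintro _ ⟨i, rfl⟩
      exact hr2 (Submodule.smul_mem_pointwise_smul _ _ _ trivial))
    rw [Cardinal.mk_fintype] at this
    simp only [Fintype.card_fin, Finset.coe_sort_coe, Fintype.card_coe] at this
    have : n + 1 ≤ T.card := by exact_mod_cast this
    omega
  rw [Fintype.not_linearIndependent_iff] at hdep
  obtain ⟨g, hg, i0, hi0⟩ := hdep
  let p : Polynomial (MvPolynomial J K) := ∑ i : Fin (n+1), Polynomial.C (g i * r) * Polynomial.X ^ (i:ℕ)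
  have hp0 : p ≠ 0 := by
    intro h0
    have := congrArg (fun q => Polynomial.coeff q (i0:ℕ)) h0
    simp only [p, Polynomial.finsetSum_coeff, Polynomial.coeff_C_mul_X_pow, Polynomial.coeff_zero] at this
    rw [Finset.sum_eq_single i0] at this
    · simp at this
      exact this.elim hi0 hr0
    · intro b _ hb
      rw [if_neg]
      intro hh; exact hb (Fin.ext hh.symm)
    · simp
  have hpe : Polynomial.aeval h p = 0 := by
    simp only [p, map_sum, map_mul, Polynomial.aeval_C, Polynomial.aeval_X, map_pow]
    rw [← hg]
    apply Finset.sum_congr rfl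
    intro i _
    rw [Algebra.smul_def, Algebra.smul_def, mul_assoc]
  have hpd : p.natDegree ≤ n := by
    apply Polynomial.natDegree_sum_le_of_forall_le
    intro i _
    exact (Polynomial.natDegree_C_mul_X_pow_le _ _).trans (by omega)
  have hhint : IsIntegral (MvPolynomial J K) h := hint.isIntegral h
  have hmd := minpoly.IsIntegrallyClosed.degree_le_of_ne_zero hp0 hpe
  have hmd' : (minpoly (MvPolynomial J K) h).natDegree ≤ n :=
    (Polynomial.natDegree_le_natDegree hmd).trans hpd
  let m := (minpoly (MvPolynomial J K) h).map (eval β)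
  have hm : m.Monic := (minpoly.monic hhint).map _
  have hroot : ∀ x ∈ Z, ∑ i, l i * x i ∈ m.roots.toFinset := by
    intro x hx
    rw [Multiset.mem_toFinset, Polynomial.mem_roots hm.ne_zero, Polynomial.IsRoot.def, Polynomial.eval_map]
    have h1 := congrArg (eval x) (minpoly.aeval (MvPolynomial J K) h)
    rw [map_zero, Polynomial.aeval_def, Polynomial.hom_eval₂] at h1
    have h2 : (eval x).comp (algebraMap (MvPolynomial J K) (MvPolynomial I K)) = eval β := by
      apply MvPolynomial.ringHom_ext
      · intro k; simp [hmap, φ, MvPolynomial.algebraMap_eq]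
      · intro j; simp [hmap, φ, ff, map_prod, hZ x hx j]
    have h3 : eval x h = ∑ i, l i * x i := by simp [h]
    rw [h2, h3] at h1
    exact h1
  calc Z.card = (Z.image fun x => ∑ i, l i * x i).card := (Finset.card_image_of_injOn hl).symm
    _ ≤ m.roots.toFinset.card := Finset.card_le_card (by
      intro y hy
      obtain ⟨x, hx, rfl⟩ := Finset.mem_image.1 hy
      exact hroot x hx)
    _ ≤ m.roots.card := Multiset.toFinset_card_le _
    _ ≤ m.natDegree := m.card_roots'
    _ ≤ n := (Polynomial.natDegree_map_le).trans hmd'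
end KRS

namespace KRS

theorem norm_common (p : ℕ) [Fact p.Prime] (L : Type) [Field L] [Finite L] [Algebra (ZMod p) L] (t : ℕ)
    (ht : Module.finrank (ZMod p) L = t) (ht0 : 0 < t) (c : Fin t → L) (hc : Function.Injective c)
    (γ : Fin t → ZMod p) (W : Finset L) (hW : ∀ y ∈ W, ∀ j, Algebra.norm (ZMod p) (y + c j) = γ j) :
    W.card ≤ t.factorial := by
  classical
  let K := AlgebraicClosure L
  have : CharP L p := charP_of_injective_algebraMap (algebraMap (ZMod p) L).injective p
  have : CharP K p := charP_of_injective_algebraMap (algebraMap L K).injective p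
  have hfr : ∀ (i : ℕ) (x y : L), (x + y) ^ p ^ i = x ^ p ^ i + y ^ p ^ i := fun i x y => add_pow_char_pow x y p i
  have hfi : ∀ i : ℕ, Function.Injective fun x : L => x ^ p ^ i := by
    intro i x y h
    have h' : x ^ p ^ i = y ^ p ^ i := h
    have : iterateFrobenius L p i x = iterateFrobenius L p i y := by
      simpa [iterateFrobenius_def] using h'
    exact iterateFrobenius_inj L p i this
  let e := algebraMap L K
  have he : Function.Injective e := e.injective
  let x : L → Fin t → K := fun y i => e (y ^ p ^ (i:ℕ))
  have hx : Function.Injective x := by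
    intro y z h
    have := congrFun h ⟨0, ht0⟩
    simpa [x] using he this
  have := krs_algebra (K := K) (I := Fin t) (J := Fin t) rfl (fun j i => - e (c j ^ p ^ (i:ℕ)))
    (by
      intro i j j' h
      have h' := neg_injective h
      exact hc (hfi i (he h')))
    (fun j => e (algebraMap _ L (γ j))) (W.image x) (by
      intro z hz j
      obtain ⟨y, hy, rfl⟩ := Finset.mem_image.1 hz
      rw [← hW y hy j, FiniteField.algebraMap_norm_eq_prod_pow, Nat.card_zmod, ht, map_prod, Finset.prod_range]
      apply Finset.prod_congr rfl
      intro i _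
      simp only [x]
      rw [sub_neg_eq_add, ← map_add, hfr])
  rw [Finset.card_image_of_injective _ hx, Fintype.card_fin] at this
  exact this

def NR (p : ℕ) (L : Type) [Field L] [Algebra (ZMod p) L] (u v : L × (ZMod p)ˣ) : Prop :=
  Algebra.norm (ZMod p) (u.1 + v.1) = (u.2 : ZMod p) * v.2

theorem NR_symm (p : ℕ) (L : Type) [Field L] [Algebra (ZMod p) L] (u v : L × (ZMod p)ˣ) (h : NR p L u v) :
    NR p L v u := by
  unfold NR at *
  rw [add_comm, h, mul_comm]

theorem NR_free (p : ℕ) [Fact p.Prime] (L : Type) [Field L] [Finite L] [Algebra (ZMod p) L] (t : ℕ)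
    (ht : Module.finrank (ZMod p) L = t) (ht0 : 0 < t) (D : Fin (t+1) → L × (ZMod p)ˣ)
    (hD : Function.Injective D) (W : Finset (L × (ZMod p)ˣ)) (hW : ∀ w ∈ W, ∀ i, NR p L (D i) w) :
    W.card ≤ t.factorial := by
  classical
  obtain rfl | ⟨w0, hw0⟩ := W.eq_empty_or_nonempty
  · simp
  have hfin : Module.Finite (ZMod p) L := inferInstance
  have hD1 : ∀ i j, (D i).1 = (D j).1 → i = j := by
    intro i j h
    apply hD
    refine Prod.ext h ?_
    have h1 := hW w0 hw0 i
    have h2 := hW w0 hw0 j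
    unfold NR at h1 h2
    rw [h, h2] at h1
    exact Units.ext (mul_right_cancel₀ w0.2.ne_zero h1).symm
  let l := Fin.last t
  have hne : ∀ w ∈ W, w.1 + (D l).1 ≠ 0 := by
    intro w hw h
    have h1 := hW w hw l
    unfold NR at h1
    rw [add_comm, h, Algebra.norm_zero] at h1
    exact (mul_ne_zero (D l).2.ne_zero w.2.ne_zero) h1.symm
  have hdl : ∀ j : Fin t, (D j.castSucc).1 - (D l).1 ≠ 0 := by
    intro j h
    have := hD1 _ _ (sub_eq_zero.1 h)
    exact (Fin.castSucc_lt_last j).ne this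
  have hinj : Set.InjOn (fun w : L × (ZMod p)ˣ => (w.1 + (D l).1)⁻¹) W := by
    intro w hw w' hw' h
    have h1 : w.1 = w'.1 := add_right_cancel (inv_injective h)
    refine Prod.ext h1 ?_
    have h2 := hW w hw l
    have h3 := hW w' hw' l
    unfold NR at h2 h3
    rw [h1, h3] at h2
    exact Units.ext (mul_left_cancel₀ (D l).2.ne_zero h2).symm
  rw [← Finset.card_image_of_injOn hinj]
  refine norm_common p L t ht ht0 (fun j => ((D j.castSucc).1 - (D l).1)⁻¹) ?_
    (fun j => ((D j.castSucc).2 : ZMod p) / ((D l).2 * Algebra.norm (ZMod p) ((D j.castSucc).1 - (D l).1))) _ ?_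
  · intro i j h
    have := hD1 _ _ (sub_left_injective (inv_injective h))
    exact Fin.castSucc_injective _ this
  · intro y hy j
    obtain ⟨w, hw, rfl⟩ := Finset.mem_image.1 hy
    have e : (w.1 + (D l).1)⁻¹ + ((D j.castSucc).1 - (D l).1)⁻¹ =
      ((D j.castSucc).1 + w.1) * ((D l).1 + w.1)⁻¹ * ((D j.castSucc).1 - (D l).1)⁻¹ := by
      have := hne w hw
      have h' := hdl j
      have h'' : (D l).1 + w.1 ≠ 0 := by rwa [add_comm]
      field_simp
      ring
    have h2 := hW w hw l
    have h3 := hW w hw j.castSucc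
    unfold NR at h2 h3
    have hn : Algebra.norm (ZMod p) ((D j.castSucc).1 - (D l).1) ≠ 0 := by
      rw [Algebra.norm_ne_zero_iff]; exact hdl j
    have hinv : ∀ z : L, Algebra.norm (ZMod p) z⁻¹ = (Algebra.norm (ZMod p) z)⁻¹ := by
      intro z
      by_cases hz : z = 0
      · rw [hz, inv_zero, Algebra.norm_zero, inv_zero]
      · apply eq_inv_of_mul_eq_one_left
        rw [← map_mul, inv_mul_cancel₀ hz, map_one]
    have w2 := w.2.ne_zero
    have d2 := (D l).2.ne_zero
    simp only [e, map_mul, hinv, h2, h3]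
    field_simp

theorem NR_count (p : ℕ) [Fact p.Prime] (L : Type) [Field L] [Finite L] [Algebra (ZMod p) L] [DecidableEq L]
    (Λ : Finset L) (y : L × (ZMod p)ˣ) (S : Finset (L × (ZMod p)ˣ)) (hS : ∀ x, x ∈ S ↔ NR p L x y) :
    (S ∩ (Λ ×ˢ Finset.univ)).card ≤ Λ.card ∧ Λ.card ≤ (S ∩ (Λ ×ˢ Finset.univ)).card + 1 := by
  have hfin : Module.Finite (ZMod p) L := inferInstance
  constructor
  · apply Finset.card_le_card_of_injOn Prod.fst
    · intro x hx
      have := (Finset.mem_inter.1 hx).2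
      exact (Finset.mem_product.1 this).1
    · intro x hx x' hx' h
      refine Prod.ext h ?_
      have h1 := (hS _).1 (Finset.mem_inter.1 hx).1
      have h2 := (hS _).1 (Finset.mem_inter.1 hx').1
      unfold NR at h1 h2
      rw [h, h2] at h1
      exact Units.ext (mul_right_cancel₀ y.2.ne_zero h1).symm
  · have : Λ.erase (-y.1) ⊆ (S ∩ (Λ ×ˢ Finset.univ)).image Prod.fst := by
      intro A hA
      obtain ⟨h1, h2⟩ := Finset.mem_erase.1 hA
      have h3 : Algebra.norm (ZMod p) (A + y.1) ≠ 0 := by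
        rw [Algebra.norm_ne_zero_iff]
        intro h; exact h1 (eq_neg_of_add_eq_zero_left h)
      refine Finset.mem_image.2 ⟨(A, Units.mk0 _ h3 * y.2⁻¹), ?_, rfl⟩
      refine Finset.mem_inter.2 ⟨(hS _).2 ?_, Finset.mem_product.2 ⟨h2, Finset.mem_univ _⟩⟩
      change Algebra.norm (ZMod p) (A + y.1) = ((Units.mk0 _ h3 * y.2⁻¹ : (ZMod p)ˣ) : ZMod p) * (y.2 : ZMod p)
      rw [Units.val_mul, mul_assoc, Units.inv_mul, mul_one, Units.val_mk0]
    have h1 := Finset.card_le_card this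
    have h2 := Finset.card_image_le (s := S ∩ (Λ ×ˢ Finset.univ)) (f := Prod.fst)
    have h3 := Finset.pred_card_le_card_erase (s := Λ) (a := -y.1)
    omega
end KRS

namespace KRS

theorem pow_event (M : ℕ) : ∃ h0 : ℕ, ∀ h ≥ h0, M * h ^ 14 ≤ 2 ^ h := by
  have := tendsto_pow_const_div_const_pow_of_one_lt 14 (r := (2:ℝ)) (by norm_num)
  have h1 := this.eventually (gt_mem_nhds (show (0:ℝ) < 1 / (M + 1) by positivity))
  obtain ⟨h0, hh⟩ := Filter.eventually_atTop.1 h1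
  refine ⟨h0, fun h hh0 => ?_⟩
  have h2 := hh h hh0
  rw [div_lt_div_iff₀ (by positivity) (by positivity)] at h2
  have h3 : ((M * h ^ 14 : ℕ) : ℝ) ≤ ((2 ^ h : ℕ) : ℝ) := by
    push_cast
    have : (0:ℝ) ≤ (h:ℝ) ^ 14 := by positivity
    nlinarith
  exact_mod_cast h3

theorem params (a C : ℕ) (ha : 2 ≤ a) (hC : 1 ≤ C) : ∃ C4 d1 : ℕ, 0 < C4 ∧ ∀ d ≥ d1, ∃ p h : ℕ, p.Prime ∧ 0 < h ∧
    4000 * (p - 1) * h ≤ d ∧ d ≤ 8000 * (p - 1) * h ∧ C * d ≤ (p - 1) * p ^ (a - 1) ∧ p ^ a ≤ C4 * d ∧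
    8 * (d ^ 6 * (p ^ (a - 1) * (p - 1))) ≤ 2 ^ h := by
  set C4 := 4 ^ a * (2 * C) with hC4
  set C5 := 8000 ^ 2 * C4 with hC5
  have hC4p : 0 < C4 := by positivity
  obtain ⟨h0, hh0⟩ := pow_event (8 * C4 * C5 ^ 7)
  refine ⟨C4, 4000 ^ 2 * C4 + C5 * h0 ^ 2 + 1, hC4p, fun d hd => ?_⟩
  have hd1 : 1 ≤ d := by omega
  have hd2 : 4000 ^ 2 * C4 ≤ d := by omega
  have hd3 : C5 * h0 ^ 2 < d := by omega
  have hex : ∃ k, 2 * C * d ≤ k ^ a := ⟨2 * C * d, Nat.le_self_pow (by omega) _⟩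
  set k := Nat.find hex with hk
  have hk1 : 2 * C * d ≤ k ^ a := Nat.find_spec hex
  have hCd : 1 ≤ C * d := Nat.mul_pos hC hd1
  have hk2 : 2 ≤ k := by
    by_contra hlt
    have : k ^ a ≤ 1 ^ a := Nat.pow_le_pow_left (by omega) a
    rw [one_pow] at this
    nlinarith
  have hk3 : (k - 1) ^ a < 2 * C * d := by
    have := Nat.find_min hex (m := k - 1) (by omega)
    omega
  obtain ⟨p, hp, hp1, hp2⟩ := Nat.exists_prime_lt_and_le_two_mul k (by omega)
  have hpa : p ^ a ≤ C4 * d := by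
    calc p ^ a ≤ (4 * (k - 1)) ^ a := Nat.pow_le_pow_left (by omega) a
      _ = 4 ^ a * (k - 1) ^ a := mul_pow _ _ _
      _ ≤ 4 ^ a * (2 * C * d) := Nat.mul_le_mul_left _ hk3.le
      _ = C4 * d := by rw [hC4]; ring
  have hpp : p ^ a = p * p ^ (a - 1) := by
    rw [← pow_succ']; congr 1; omega
  have hp2' : p ≤ 2 * (p - 1) := by omega
  have hfit : C * d ≤ (p - 1) * p ^ (a - 1) := by
    have h1 : k ^ a ≤ p ^ a := Nat.pow_le_pow_left hp1.le a
    have h2 : p * p ^ (a - 1) ≤ 2 * (p - 1) * p ^ (a - 1) := Nat.mul_le_mul_right _ hp2'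
    rw [mul_assoc] at h2 hk1
    omega
  have hpsq : (p - 1) ^ 2 ≤ C4 * d := by
    calc (p - 1) ^ 2 ≤ p ^ 2 := Nat.pow_le_pow_left (by omega) 2
      _ ≤ p ^ a := Nat.pow_le_pow_right (by omega) ha
      _ ≤ _ := hpa
  set P := p - 1 with hP
  have hPpos : 0 < P := by omega
  have hPd : 4000 * P ≤ d := by
    have h1 : (4000 * P) ^ 2 ≤ d ^ 2 := by
      calc (4000 * P) ^ 2 = 4000 ^ 2 * P ^ 2 := mul_pow _ _ _
        _ ≤ 4000 ^ 2 * (C4 * d) := Nat.mul_le_mul_left _ hpsq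
        _ = (4000 ^ 2 * C4) * d := by ring
        _ ≤ d * d := Nat.mul_le_mul_right _ hd2
        _ = d ^ 2 := by ring
    exact (Nat.pow_le_pow_iff_left (by norm_num)).1 h1
  let h := d / (4000 * P)
  have hh : 0 < h := Nat.div_pos hPd (by positivity)
  have hl : 4000 * P * h ≤ d := Nat.mul_div_le d _
  have hu : d ≤ 8000 * P * h := by
    have h1 : d < 4000 * P * (h + 1) := by
      have := Nat.lt_mul_div_succ d (show 0 < 4000 * P by positivity)
      exact this
    have h2 : 4000 * P * (h + 1) ≤ 4000 * P * (2 * h) := Nat.mul_le_mul_left _ (by omega)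
    calc d ≤ 4000 * P * (2 * h) := by omega
      _ = 8000 * P * h := by ring
  have hdh : d ≤ C5 * h ^ 2 := by
    have h1 : d * d ≤ (C5 * h ^ 2) * d := by
      calc d * d ≤ (8000 * P * h) * (8000 * P * h) := Nat.mul_le_mul hu hu
        _ = (8000 ^ 2 * h ^ 2) * P ^ 2 := by ring
        _ ≤ (8000 ^ 2 * h ^ 2) * (C4 * d) := Nat.mul_le_mul_left _ hpsq
        _ = (C5 * h ^ 2) * d := by rw [hC5]; ring
    exact Nat.le_of_mul_le_mul_right h1 hd1
  have hhh : h0 ≤ h := by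
    by_contra hlt
    have : h ^ 2 ≤ h0 ^ 2 := Nat.pow_le_pow_left (by omega) 2
    have := Nat.mul_le_mul_left C5 this
    omega
  refine ⟨p, h, hp, hh, hl, hu, hfit, hpa, ?_⟩
  have hX : p ^ (a - 1) * P ≤ C4 * d := by
    calc p ^ (a - 1) * P ≤ p ^ (a - 1) * p := Nat.mul_le_mul_left _ (by omega)
      _ = p ^ a := by rw [hpp]; ring
      _ ≤ _ := hpa
  calc 8 * (d ^ 6 * (p ^ (a - 1) * P)) ≤ 8 * (d ^ 6 * (C4 * d)) := by gcongr
    _ = 8 * C4 * d ^ 7 := by ring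
    _ ≤ 8 * C4 * (C5 * h ^ 2) ^ 7 := by gcongr
    _ = (8 * C4 * C5 ^ 7) * h ^ 14 := by ring
    _ ≤ 2 ^ h := hh0 h hhh

theorem cut {V : Type} [Fintype V] [DecidableEq V] (M : V → Finset V) (hs : ∀ x y, x ∈ M y → y ∈ M x)
    (hir : ∀ x, x ∉ M x) :
    ∃ A : Finset V, ∀ v, (M v).card ≤ 2 * ((M v).filter fun u => (u ∈ A ↔ v ∉ A)).card := by
  let cutE : Finset V → ℕ := fun A => ∑ v, ((M v).filter fun u => (u ∈ A ↔ v ∉ A)).card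
  obtain ⟨A, -, hA⟩ := Finset.exists_max_image (Finset.univ : Finset (Finset V)) cutE ⟨∅, Finset.mem_univ _⟩
  refine ⟨A, fun v => ?_⟩
  by_contra hlt
  push Not at hlt
  let A' : Finset V := symmDiff A {v}
  have hA'v : v ∈ A' ↔ v ∉ A := by simp [A', Finset.mem_symmDiff]
  have hA'u : ∀ u, u ≠ v → (u ∈ A' ↔ u ∈ A) := by
    intro u hu; simp [A', Finset.mem_symmDiff, hu]
  have h := hA A' (Finset.mem_univ _)
  -- express the cut with indicator sums
  have key : ∀ B : Finset V, cutE B = ∑ x, ∑ y, if (y ∈ M x ∧ (y ∈ B ↔ x ∉ B)) then 1 else 0 := by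
    intro B
    apply Finset.sum_congr rfl
    intro x _
    rw [Finset.card_filter, ← Finset.sum_filter_add_sum_filter_not Finset.univ (fun y => y ∈ M x)]
    rw [Finset.filter_mem_eq_inter, Finset.univ_inter]
    rw [Finset.sum_eq_zero (s := Finset.univ.filter fun y => y ∉ M x)]
    · rw [add_zero]; apply Finset.sum_congr rfl; intro y hy; simp [hy]
    · intro y hy; simp [(Finset.mem_filter.1 hy).2]
  let g : Finset V → V → V → ℕ := fun B x y => if (y ∈ M x ∧ (y ∈ B ↔ x ∉ B)) then 1 else 0
  have key' : ∀ B, cutE B = 2 * (∑ y, g B v y) + ∑ x ∈ Finset.univ.erase v, ∑ y ∈ Finset.univ.erase v, g B x y := by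
    intro B
    have gs : ∀ x y, g B x y = g B y x := by
      intro x y
      simp only [g]
      apply if_congr _ rfl rfl
      constructor
      · rintro ⟨p, q⟩; exact ⟨hs _ _ p, by tauto⟩
      · rintro ⟨p, q⟩; exact ⟨hs _ _ p, by tauto⟩
    have gv : g B v v = 0 := by simp [g, hir]
    rw [key]
    change ∑ x, ∑ y, g B x y = _
    rw [← Finset.add_sum_erase _ _ (Finset.mem_univ v)]
    have : ∑ x ∈ Finset.univ.erase v, ∑ y, g B x y =
        ∑ x ∈ Finset.univ.erase v, (g B v x + ∑ y ∈ Finset.univ.erase v, g B x y) := by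
      apply Finset.sum_congr rfl
      intro x _
      rw [← Finset.add_sum_erase _ _ (Finset.mem_univ v), gs]
    rw [this, Finset.sum_add_distrib]
    have h2 : ∑ y, g B v y = ∑ x ∈ Finset.univ.erase v, g B v x := by
      rw [← Finset.add_sum_erase _ _ (Finset.mem_univ v), gv, zero_add]
    omega
  rw [key', key'] at h
  have e1 : ∑ x ∈ Finset.univ.erase v, ∑ y ∈ Finset.univ.erase v, g A' x y =
      ∑ x ∈ Finset.univ.erase v, ∑ y ∈ Finset.univ.erase v, g A x y := by
    apply Finset.sum_congr rfl
    intro x hx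
    apply Finset.sum_congr rfl
    intro y hy
    simp only [g]
    apply if_congr _ rfl rfl
    rw [hA'u x (Finset.ne_of_mem_erase hx), hA'u y (Finset.ne_of_mem_erase hy)]
  have e2 : ∑ y, g A v y = ((M v).filter fun u => (u ∈ A ↔ v ∉ A)).card := by
    simp only [g]
    rw [← Finset.card_filter]
    congr 1; ext y; simp
  have e3 : ∑ y, g A' v y = ((M v).filter fun u => ¬ (u ∈ A ↔ v ∉ A)).card := by
    simp only [g]
    rw [← Finset.card_filter]
    congr 1; ext y
    simp only [Finset.mem_filter, Finset.mem_univ, true_and]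
    apply and_congr_right
    intro hy
    have : y ≠ v := by rintro rfl; exact hir _ hy
    rw [hA'v, hA'u y this]
    tauto
  have e4 := Finset.card_filter_add_card_filter_not (s := M v) (fun u => (u ∈ A ↔ v ∉ A))
  omega
end KRS

namespace KRS

theorem main_exists (a : ℕ) (ha : 2 ≤ a) : ∃ C4 d1 : ℕ, 0 < C4 ∧ ∀ d ≥ d1, 1 ≤ d →
    ∀ (V : Type) [Fintype V] [DecidableEq V] (M : V → Finset V), (∀ x y, x ∈ M y → y ∈ M x) →
    (∀ x, x ∉ M x) → (∀ x, (M x).card = d) →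
    ∃ (p h : ℕ) (X : Type) (R : X → X → Prop) (χ : V → X) (H : V → V → Prop),
      0 < p ∧ d ≤ 8000 * p * h ∧ p ^ a ≤ C4 * d ∧
      (∀ D : Fin a → X, Function.Injective D → ∀ W : Finset X, (∀ w ∈ W, ∀ i, R (D i) w) →
        W.card ≤ (a - 1).factorial) ∧
      (∀ u v, H u v → H v u) ∧ (∀ u v, H u v → v ∈ M u ∧ R (χ u) (χ v)) ∧
      (∀ u v v', H u v → H u v' → χ v = χ v' → v = v') ∧
      ∀ u, ∃ T : Finset V, (∀ v ∈ T, H u v) ∧ h ≤ 2 * T.card := by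
  classical
  obtain ⟨d0, hass⟩ := assembly
  obtain ⟨C4, d1, hC4, hpar⟩ := params a (300000 + (2 * 3 ^ 33 + 60)) ha (by norm_num)
  refine ⟨C4, max d0 d1, hC4, fun d hd hd1 V _ _ M hMs hMi hMd => ?_⟩
  obtain ⟨p, h, hp, hh, hl, hu, hfit, hpa, hbig⟩ := hpar d (le_trans (le_max_right _ _) hd)
  obtain ⟨A, hA⟩ := cut M hMs hMi
  have hpf : Fact p.Prime := ⟨hp⟩
  let L := GaloisField p (a - 1)
  have hfr : Module.finrank (ZMod p) L = a - 1 := GaloisField.finrank p (by omega)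
  have hLfin : Finite L := inferInstance
  let hLf : Fintype L := Fintype.ofFinite L
  have hcard : Fintype.card L = p ^ (a - 1) := by
    rw [← Nat.card_eq_fintype_card]; exact GaloisField.card p _ (by omega)
  have hp2 := hp.two_le
  set P := p - 1 with hP
  have hPpos : 0 < P := by omega
  have hPd : 4000 * P ≤ d := le_trans (Nat.le_mul_of_pos_right _ hh) hl
  have hun : Fintype.card (ZMod p)ˣ = P := ZMod.card_units p
  -- sizes of the palettes
  have ceil : ∀ n : ℕ, ∃ m, n ≤ m * P ∧ m * P ≤ n + P := by
    intro n
    refine ⟨n / P + 1, ?_, ?_⟩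
    · have := Nat.lt_mul_div_succ n hPpos
      rw [mul_comm]; exact this.le
    · have := Nat.div_mul_le_self n P
      rw [add_mul]; omega
  obtain ⟨m0, hm0, hm0'⟩ := ceil (150000 * d)
  obtain ⟨m1, hm1, hm1'⟩ := ceil ((2 * 3 ^ 33 + 60) * d)
  have hm : m0 + m1 ≤ Fintype.card L := by
    rw [hcard]
    have h1 : (m0 + m1) * P ≤ p ^ (a - 1) * P := by
      rw [mul_comm (p ^ (a - 1))]
      refine le_trans ?_ hfit
      rw [add_mul, add_mul]
      omega
    exact Nat.le_of_mul_le_mul_right h1 hPpos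
  have hm2 : 2 ≤ m0 := by
    by_contra hlt
    have : m0 * P ≤ 1 * P := Nat.mul_le_mul_right _ (by omega)
    omega
  obtain ⟨Λ0, -, hΛ0⟩ := Finset.exists_subset_card_eq (s := (Finset.univ : Finset L)) (n := m0)
    (by rw [Finset.card_univ]; omega)
  obtain ⟨Λ1, hΛ1s, hΛ1⟩ := Finset.exists_subset_card_eq (s := Λ0ᶜ) (n := m1)
    (by rw [Finset.card_compl]; omega)
  have hc0 : (Λ0 ×ˢ (Finset.univ : Finset (ZMod p)ˣ)).card = m0 * P := by
    rw [Finset.card_product, hΛ0, Finset.card_univ, hun]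
  have hc1 : (Λ1 ×ˢ (Finset.univ : Finset (ZMod p)ˣ)).card = m1 * P := by
    rw [Finset.card_product, hΛ1, Finset.card_univ, hun]
  obtain ⟨χ, H, h1, h2, h3, h4⟩ := hass d (le_trans (le_max_left _ _) hd) hd1 V (L × (ZMod p)ˣ)
    (fun v => (M v).filter fun u => (u ∈ A ↔ v ∉ A))
    (by
      intro x y hx
      obtain ⟨p, q⟩ := Finset.mem_filter.1 hx
      exact Finset.mem_filter.2 ⟨hMs _ _ p, by tauto⟩)
    (fun w => (Finset.card_filter_le _ _).trans (hMd w).le)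
    (fun w => by rw [← hMd w]; exact hA w) A
    (fun x y hx => (Finset.mem_filter.1 hx).2)
    (NR p L) (NR_symm p L) (Λ0 ×ˢ Finset.univ) (Λ1 ×ˢ Finset.univ)
    (by
      rw [Finset.disjoint_left]
      intro x hx hx'
      exact (Finset.mem_compl.1 (hΛ1s (Finset.mem_product.1 hx').1)) (Finset.mem_product.1 hx).1)
    P h hPpos hh hl hu (by rw [hc0]; exact hm0) (by rw [hc0]; omega) (by rw [hc1]; exact hm1)
    (by
      intro S hS y
      obtain ⟨e1, e2⟩ := NR_count p L Λ0 y (S y) (hS y)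
      rw [hc0]
      rw [hΛ0] at e1 e2
      exact ⟨Nat.mul_le_mul_right _ e1, Nat.mul_le_mul_right _ (by omega)⟩)
    (by rw [Fintype.card_prod, hcard, hun]; exact hbig)
  refine ⟨p, h, L × (ZMod p)ˣ, NR p L, χ, H, hp.pos, ?_, hpa, ?_, h1, fun u v huv => ?_, h3, h4⟩
  · refine hu.trans (Nat.mul_le_mul_right _ (Nat.mul_le_mul_left _ (by omega)))
  · intro D hD W hW
    obtain ⟨t, rfl⟩ : ∃ t, a = t + 1 := ⟨a - 1, by omega⟩
    exact NR_free p L t hfr (by omega) D hD W hW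
  · exact ⟨(Finset.mem_filter.1 (h2 u v huv).1).1, (h2 u v huv).2⟩

theorem rate (a d p h n C4 : ℕ) (ha : 2 ≤ a) (hC4 : 0 < C4) (hd : 1 ≤ d) (hp : 0 < p)
    (hdp : d ≤ 8000 * p * h) (hpa : p ^ a ≤ C4 * d) (hn : h ≤ 2 * n) :
    1 / (16000 * (C4:ℝ) ^ (1 / (a:ℝ))) * (d:ℝ) ^ (1 - 1 / (a:ℝ)) ≤ n := by
  have hdr : (0:ℝ) < d := by exact_mod_cast hd
  have hCr : (0:ℝ) < C4 := by exact_mod_cast hC4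
  have har : (a:ℝ) ≠ 0 := by positivity
  have h1 : (p:ℝ) ≤ ((C4:ℝ) * d) ^ (1 / (a:ℝ)) := by
    have h2 : (p:ℝ) ^ (a:ℝ) ≤ (C4:ℝ) * d := by
      rw [Real.rpow_natCast]; exact_mod_cast hpa
    calc (p:ℝ) = ((p:ℝ) ^ (a:ℝ)) ^ (1 / (a:ℝ)) := by
          rw [← Real.rpow_mul (by positivity), mul_one_div_cancel har, Real.rpow_one]
      _ ≤ _ := Real.rpow_le_rpow (by positivity) h2 (by positivity)
  rw [Real.mul_rpow hCr.le hdr.le] at h1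
  rw [Real.rpow_sub hdr, Real.rpow_one]
  have hx : (0:ℝ) < (C4:ℝ) ^ (1 / (a:ℝ)) := Real.rpow_pos_of_pos hCr _
  have hy : (0:ℝ) < (d:ℝ) ^ (1 / (a:ℝ)) := Real.rpow_pos_of_pos hdr _
  generalize (C4:ℝ) ^ (1 / (a:ℝ)) = x at *
  generalize (d:ℝ) ^ (1 / (a:ℝ)) = y at *
  have h3 : (d:ℝ) ≤ 16000 * p * n := by
    have : d ≤ 16000 * p * n := by
      calc d ≤ 8000 * p * h := hdp
        _ ≤ 8000 * p * (2 * n) := Nat.mul_le_mul_left _ hn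
        _ = _ := by ring
    exact_mod_cast this
  have h4 : (d:ℝ) ≤ 16000 * (x * y) * n := h3.trans (by gcongr)
  rw [div_mul_div_comm, one_mul, div_le_iff₀ (by positivity)]
  linarith
end KRS

theorem statement14 (a b : ℕ) (ha : 2 ≤ a) (hb : (a - 1).factorial < b) :
    ∃ (c : ℝ) (d₀ : ℕ), 0 < c ∧
      ∀ d : ℕ, d₀ ≤ d →
        ∀ (V : Type) [Fintype V] (G : SimpleGraph V), RegularDeg G d →
          ∃ H : SimpleGraph V, H ≤ G ∧
            ¬ ContainsCopy (completeBipartiteGraph (Fin a) (Fin b)) H ∧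
            ∀ v : V, c * (d : ℝ) ^ (1 - 1 / (a : ℝ)) ≤ (deg H v : ℝ) := by
  classical
  obtain ⟨C4, d1, hC4, hmain⟩ := KRS.main_exists a ha
  refine ⟨1 / (16000 * (C4:ℝ) ^ (1 / (a:ℝ))), d1 + 1, ?_, ?_⟩
  · have : (0:ℝ) < C4 := by exact_mod_cast hC4
    positivity
  intro d hd V _ G hG
  have hMc : ∀ x, (G.neighborFinset x).card = d := by
    intro x
    rw [← hG x, deg, ← Set.ncard_coe_finset, SimpleGraph.coe_neighborFinset]
  obtain ⟨p, h, X, R, χ, E, hp, hdp, hpa, hfree, hs, hE, hinj, hdeg⟩ := hmain d (by omega) (by omega) V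
    (fun v => G.neighborFinset v)
    (by intro x y hxy; rw [SimpleGraph.mem_neighborFinset] at *; exact hxy.symm)
    (by intro x hx; rw [SimpleGraph.mem_neighborFinset] at hx; exact G.loopless.irrefl x hx) hMc
  have hEG : ∀ u v, E u v → G.Adj u v := by
    intro u v huv
    have := (hE u v huv).1
    rwa [SimpleGraph.mem_neighborFinset] at this
  let H : SimpleGraph V :=
    { Adj := E
      symm := ⟨fun u v huv => hs u v huv⟩
      loopless := ⟨fun u hu => G.loopless.irrefl u (hEG u u hu)⟩ }
  refine ⟨H, fun u v huv => hEG u v huv, ?_, ?_⟩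
  · rintro ⟨f, hf⟩
    have hadj : ∀ (i : Fin a) (j : Fin b), E (f (Sum.inl i)) (f (Sum.inr j)) := by
      intro i j
      have : H.Adj (f (Sum.inl i)) (f (Sum.inr j)) := f.map_rel (by simp)
      exact this
    have hb0 : 0 < b := by omega
    have hD : Function.Injective fun i : Fin a => χ (f (Sum.inl i)) := by
      intro i i' hi
      have := hinj (f (Sum.inr ⟨0, hb0⟩)) _ _ (hs _ _ (hadj i _)) (hs _ _ (hadj i' _)) hi
      exact Sum.inl_injective (hf this)
    have hW : Function.Injective fun j : Fin b => χ (f (Sum.inr j)) := by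
      intro j j' hj
      have := hinj (f (Sum.inl ⟨0, by omega⟩)) _ _ (hadj _ j) (hadj _ j') hj
      exact Sum.inr_injective (hf this)
    have := hfree _ hD (Finset.univ.image fun j : Fin b => χ (f (Sum.inr j))) (by
      intro w hw i
      obtain ⟨j, -, rfl⟩ := Finset.mem_image.1 hw
      exact (hE _ _ (hadj i j)).2)
    rw [Finset.card_image_of_injective _ hW, Finset.card_univ, Fintype.card_fin] at this
    omega
  · intro v
    obtain ⟨T, hT1, hT2⟩ := hdeg v
    have hle : T.card ≤ deg H v := by
      rw [deg, ← Set.ncard_coe_finset]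
      exact Set.ncard_le_ncard (fun u hu => hT1 u hu) (Set.toFinite _)
    exact KRS.rate a d p h (deg H v) C4 ha hC4 (by omega) hp hdp hpa (by omega)
end

section
/- Let F be a graph of diameter at most 2, i.e., any two distinct vertices of F are adjacent or have a common neighbor. Then every locally injective homomorphism from F to any graph 𝒢 is injective. In particular, for all a ≤ b, every locally injective homomorphism from the complete bipartite graph K_{a,b} to a graph 𝒢 is injective, and hence the family {K_{a,b}} is closed. -/
open SimpleGraph

theorem statement19 :
    (∀ (VF : Type) [Fintype VF] (F : SimpleGraph VF),
        (∀ u v : VF, u ≠ v → F.Adj u v ∨ ∃ w : VF, F.Adj u w ∧ F.Adj v w) →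
        ∀ (W : Type) [Fintype W] (𝒢 : SimpleGraph W) (φ : F →g 𝒢),
          LocallyInjective φ → Function.Injective φ) ∧
    (∀ a b : ℕ, 1 ≤ a → a ≤ b →
      (∀ (W : Type) [Fintype W] (𝒢 : SimpleGraph W)
          (φ : completeBipartiteGraph (Fin a) (Fin b) →g 𝒢),
          LocallyInjective φ → Function.Injective φ) ∧
      (∀ (W : Type) [Fintype W] (𝒢 : SimpleGraph W),
          NoLocInjHom (completeBipartiteGraph (Fin a) (Fin b)) 𝒢 ↔
            ¬ ContainsCopy (completeBipartiteGraph (Fin a) (Fin b)) 𝒢)) := by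
  have key : ∀ (VF : Type) [Fintype VF] (F : SimpleGraph VF),
        (∀ u v : VF, u ≠ v → F.Adj u v ∨ ∃ w : VF, F.Adj u w ∧ F.Adj v w) →
        ∀ (W : Type) [Fintype W] (𝒢 : SimpleGraph W) (φ : F →g 𝒢),
          LocallyInjective φ → Function.Injective φ := by
    intro VF _ F hF W _ G φ hφ u v huv
    by_contra hne
    rcases hF u v hne with h | ⟨w, h1, h2⟩
    · exact (φ.map_adj h).ne huv
    · exact hne (hφ w h1.symm h2.symm huv)
  refine ⟨key, fun a b ha hab => ?_⟩
  have k2 : ∀ (W : Type) [Fintype W] (𝒢 : SimpleGraph W)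
          (φ : completeBipartiteGraph (Fin a) (Fin b) →g 𝒢),
          LocallyInjective φ → Function.Injective φ := by
    intro W _ G φ
    refine key _ _ ?_ W G φ
    rintro (u | u) (v | v) _
    · exact Or.inr ⟨Sum.inr ⟨0, by omega⟩, by simp, by simp⟩
    · exact Or.inl (by simp)
    · exact Or.inl (by simp)
    · exact Or.inr ⟨Sum.inl ⟨0, by omega⟩, by simp, by simp⟩
  refine ⟨k2, fun W _ G => not_congr ⟨?_, ?_⟩⟩
  · rintro ⟨φ, h⟩
    exact ⟨φ, k2 W G φ h⟩
  · rintro ⟨φ, h⟩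
    exact ⟨φ, fun v => h.injOn⟩
end
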